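/- Let g ≥ 4 with g odd, or g = 4, or g = 6. Then O(g, ℤ/2) is isomorphic to the presented group with generators a₁, …, a_{g−1}, b and relators: (1) a_i² for i = 1, …, g−1 and b²; (2) (a_i a_j)² for all i, j with |i − j| > 1; (3) (a_i a_{i+1})³ for i = 1, …, g−2; (4) (a_i b)² for all i ∈ {1, …, g−1} with i ≠ 4; (5) (a₄ b)³ (present when g ≥ 5); (6) (a₂a₃a₄a₅a₆b)¹²·((a₁a₂a₃a₄a₅a₆b)⁹)⁻¹ (present when g ≥ 7). -/

import Mathlib

/-!
The presented group `M` maps to `O(g, ℤ/2)`: `aᵢ` goes to a transposition and `b` to the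
transvection along the sum of the first four basis vectors; the relators hold by a computation in
at most seven coordinates (`lift_rels`). The map is surjective because permutation matrices and
transvections along sums of four basis vectors generate the orthogonal group
(`mem_of_generators`).

Injectivity is a coset enumeration. By the Coxeter presentation of the symmetric group
(`exists_perm_hom`) the `aᵢ` define a homomorphism `s` from the permutations of the `g` letters to
`M`, and conjugating `b` gives an element `B I` for each `4`-set `I` of letters (`exists_tsys`).
For a set `J` of letters let `N J` be the subgroup generated by the permutations of `J` and the
`B I` with `I ⊆ J`. Vectors over `ℤ/2` are regarded as sets of letters. The orbit of the basis
vector `{p}`, `p ∈ J`, under the image of `N J` in the orthogonal group consists of the odd subsets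
of `J`, except `J` itself if it has more than one letter. The cosets of `N (J \ {p})` in `N J` are
labelled by the same sets, compatibly with the generators: the label of `{i}` is the coset of the
transposition of `p` and `i`, and the label of a larger set `v` is obtained by a transvection `B K`,
where `K` meets `v` in three letters, from the smaller set `v ∆ K` (`TSys.good_succ`). Hence an
element of `N J` that acts trivially on vectors lies in `N (J \ {p})`, and by induction it is
trivial (`TSys.eq_one_of_act`).

That the labels are well defined and have the right behaviour follows from relators (1)–(5), with
one exception: `B I` should fix the label of `v` when `I` and `v` are disjoint. Here the property
`TSys.Seven` is used. It is deduced from relator (6) in `TSys.mem_seven`, by following the orbit of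
a coset of the subgroup in question under the two sides of the relation. The argument works for all
`g ≥ 4`.
-/

/-- The generator of the free group on `Fin g` indexed by `i` (and `1` if `i` is out of range).
Index `0` corresponds to the generator `b` and index `i`, for `1 ≤ i ≤ g - 1`, to `aᵢ`. -/
def gen (g i : ℕ) : FreeGroup (Fin g) :=
  if h : i < g then FreeGroup.of ⟨i, h⟩ else 1

/-- The relators (1)–(6) of Theorem 1.1, on the generators `a₁, …, a_{g-1}, b`. -/
def rels (g : ℕ) : Set (FreeGroup (Fin g)) :=
  -- (1) aᵢ² for i = 1, …, g−1, and b²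
  {r | ∃ i < g, r = gen g i ^ 2} ∪
  -- (2) (aᵢaⱼ)² for |i − j| > 1
  {r | ∃ i j, 1 ≤ i ∧ 1 ≤ j ∧ i < g ∧ j < g ∧ (i + 1 < j ∨ j + 1 < i) ∧
      r = (gen g i * gen g j) ^ 2} ∪
  -- (3) (aᵢa_{i+1})³ for i = 1, …, g−2
  {r | ∃ i, 1 ≤ i ∧ i + 1 < g ∧ r = (gen g i * gen g (i + 1)) ^ 3} ∪
  -- (4) (aᵢb)² for i ≠ 4
  {r | ∃ i, 1 ≤ i ∧ i < g ∧ i ≠ 4 ∧ r = (gen g i * gen g 0) ^ 2} ∪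
  -- (5) (a₄b)³, present when g ≥ 5
  {r | 5 ≤ g ∧ r = (gen g 4 * gen g 0) ^ 3} ∪
  -- (6) (a₂a₃a₄a₅a₆b)¹²·((a₁a₂a₃a₄a₅a₆b)⁹)⁻¹, present when g ≥ 7
  {r | 7 ≤ g ∧ r =
      (gen g 2 * gen g 3 * gen g 4 * gen g 5 * gen g 6 * gen g 0) ^ 12 *
      ((gen g 1 * gen g 2 * gen g 3 * gen g 4 * gen g 5 * gen g 6 * gen g 0) ^ 9)⁻¹}

open Equiv
open scoped symmDiff

/-! ### The Coxeter presentation of the symmetric group -/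


/-- Coset criterion. If `c` labels the points of a set `V` by cosets of `N`, compatibly with the
generators `S`, and labels `x₀` by `N` itself, then every element generated by `S` that fixes `x₀`
lies in `N`. -/
theorem mem_of_equivariant {G X : Type*} [Group G] {S : Set G} {N : Subgroup G}
    (act : G →* Perm X) (c : X → G ⧸ N) (V : Set X) {x₀ : X} (hx₀ : x₀ ∈ V)
    (hc : c x₀ = ((1 : G) : G ⧸ N)) (hinv : ∀ m ∈ S, m⁻¹ ∈ S)
    (hS : ∀ m ∈ S, ∀ x ∈ V, act m x ∈ V ∧ m • c x = c (act m x))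
    {m : G} (hm : m ∈ Subgroup.closure S) (hfix : act m x₀ = x₀) : m ∈ N := by
  have key : ∀ m ∈ Subgroup.closure S, ∀ x, (act m x ∈ V ↔ x ∈ V) ∧
      (x ∈ V → m • c x = c (act m x)) := by
    intro m hm
    induction hm using Subgroup.closure_induction with
    | mem m hm =>
      intro x
      refine ⟨⟨fun h => ?_, fun h => (hS m hm x h).1⟩, fun h => (hS m hm x h).2⟩
      simpa using (hS _ (hinv m hm) _ h).1
    | one => intro x; simp
    | mul a b _ _ iha ihb =>
      intro x
      simp only [map_mul, Perm.mul_apply]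
      refine ⟨(iha _).1.trans (ihb _).1, fun h => ?_⟩
      rw [mul_smul, (ihb x).2 h, (iha _).2 ((ihb x).1.2 h)]
    | inv a _ iha =>
      intro x
      have h1 := iha ((act a)⁻¹ x)
      rw [← Perm.mul_apply, mul_inv_cancel, Perm.one_apply] at h1
      simp only [map_inv]
      refine ⟨h1.1.symm, fun h => ?_⟩
      rw [inv_smul_eq_iff, h1.2 (h1.1.1 h)]
  have h := (key m hm x₀).2 hx₀
  rw [hfix, hc] at h
  have h2 : ((m * 1 : G) : G ⧸ N) = ((1 : G) : G ⧸ N) := h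
  rw [mul_one] at h2
  simpa using QuotientGroup.eq.1 h2.symm

set_option maxHeartbeats 1000000 in
/-- Coxeter presentation of the symmetric group: elements satisfying the relations of the adjacent
transpositions are the images of these under a homomorphism. The homomorphism is found as the graph
`Γ n` generated by the pairs `(a i, t i)` in `M × Perm (Fin n)`; its second projection is injective
by induction on the number of letters, the cosets of `Γ k` in `Γ (k + 1)` being labelled by the
`k + 1` letters. -/
theorem exists_perm_hom {M : Type*} [Group M] (n : ℕ) (a : ℕ → M)
    (h1 : ∀ i, i + 1 < n → a i * a i = 1)
    (h2 : ∀ i, i + 2 < n → a i * a (i + 1) * a i = a (i + 1) * a i * a (i + 1))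
    (h3 : ∀ i j, i + 1 < j → j + 1 < n → a i * a j = a j * a i) :
    ∃ s : Perm (Fin n) →* M, ∀ i (h : i + 1 < n),
      s (swap ⟨i, by omega⟩ ⟨i + 1, h⟩) = a i := by
  classical
  let t : ℕ → Perm (Fin n) := fun i =>
    if h : i + 1 < n then swap ⟨i, by omega⟩ ⟨i + 1, h⟩ else 1
  have ht : ∀ i (h : i + 1 < n), t i = swap ⟨i, by omega⟩ ⟨i + 1, h⟩ := fun i h => by
    simp [t, h]
  have htv : ∀ i, i + 1 < n → ∀ x : Fin n, ((t i x : Fin n) : ℕ) =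
      if (x : ℕ) = i then i + 1 else if (x : ℕ) = i + 1 then i else x := by
    intro i h x
    rw [ht i h, swap_apply_def]
    simp only [Fin.ext_iff]
    split_ifs <;> rfl
  let A : ℕ → M × Perm (Fin n) := fun i => (a i, t i)
  have A1 : ∀ i, i + 1 < n → A i * A i = 1 := fun i h => by
    refine Prod.ext (h1 i h) ?_
    simp [A, ht i h]
  have A2 : ∀ i, i + 2 < n → A i * A (i + 1) * A i = A (i + 1) * A i * A (i + 1) := fun i h => by
    refine Prod.ext (h2 i h) (Equiv.ext fun x => Fin.ext ?_)
    have e1 := htv i (by omega)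
    have e2 := htv (i + 1) (by omega)
    simp only [A, Prod.mk_mul_mk, Perm.mul_apply, e1, e2]
    split_ifs <;> omega
  have A3 : ∀ i j, i + 1 < j → j + 1 < n → A i * A j = A j * A i := fun i j hij h => by
    refine Prod.ext (h3 i j hij h) (Equiv.ext fun x => Fin.ext ?_)
    have e1 := htv i (by omega)
    have e2 := htv j (by omega)
    simp only [A, Prod.mk_mul_mk, Perm.mul_apply, e1, e2]
    split_ifs <;> omega
  let Γ : ℕ → Subgroup (M × Perm (Fin n)) := fun k =>
    Subgroup.closure {x | ∃ i, i + 1 < k ∧ x = A i}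
  have inj : ∀ k, k ≤ n → ∀ x ∈ Γ k, x.2 = 1 → x = 1 := by
    intro k
    induction k with
    | zero =>
      intro _ x hx _
      have : {x | ∃ i, i + 1 < 0 ∧ x = A i} = (∅ : Set (M × Perm (Fin n))) := by
        ext; simp
      simpa [Γ, this] using hx
    | succ k ih =>
      intro hk x hx hx2
      refine ih (by omega) x ?_ hx2
      -- `d j` is the coset attached to the letter `k - j`
      let d : ℕ → (M × Perm (Fin n)) ⧸ Γ k := fun j =>
        Nat.rec ((1 : M × Perm (Fin n)) : (M × Perm (Fin n)) ⧸ Γ k)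
          (fun j r => A (k - j - 1) • r) j
      have d0 : d 0 = ((1 : M × Perm (Fin n)) : (M × Perm (Fin n)) ⧸ Γ k) := rfl
      have dS : ∀ j, d (j + 1) = A (k - j - 1) • d j := fun j => rfl
      have low : ∀ j, j ≤ k → ∀ i, i + 1 < k - j → A i • d j = d j := by
        intro j
        induction j with
        | zero =>
          intro _ i hi
          rw [d0]
          have : A i ∈ Γ k := Subgroup.subset_closure ⟨i, hi, rfl⟩
          change ((A i * 1 : M × Perm (Fin n)) : (M × Perm (Fin n)) ⧸ Γ k) = _
          rw [mul_one]
          exact (QuotientGroup.eq.2 (by simpa using this)).symm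
        | succ j ihj =>
          intro hj i hi
          rw [dS, ← mul_smul, A3 i _ (by omega) (by omega), mul_smul, ihj (by omega) i (by omega)]
      have high : ∀ j, j ≤ k → ∀ i, k - j < i → i < k → A i • d j = d j := by
        intro j
        induction j with
        | zero => intro _ i hi hi2; omega
        | succ j ihj =>
          intro hj i hi hik
          rcases Nat.lt_or_ge (k - j) i with h | h
          · rw [dS, ← mul_smul, ← A3 _ i (by omega) (by omega), mul_smul,
              ihj (by omega) i h hik]
          · obtain ⟨j, rfl⟩ : ∃ j', j = j' + 1 := ⟨j - 1, by omega⟩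
            obtain ⟨q, rfl⟩ : ∃ q, i = q + 1 := ⟨i - 1, by omega⟩
            have e1 : k - (j + 1) - 1 = q := by omega
            have e2 : k - j - 1 = q + 1 := by omega
            rw [dS, dS, e1, e2, ← mul_smul, ← mul_smul, ← A2 q (by omega), mul_smul, mul_smul,
              low j (by omega) q (by omega)]
      refine mem_of_equivariant (S := {x | ∃ i, i + 1 < k + 1 ∧ x = A i})
        (MonoidHom.snd M (Perm (Fin n))) (fun x : Fin n => d (k - x)) {x | (x : ℕ) ≤ k}
        (x₀ := ⟨k, by omega⟩) (by simp) (by simp [d0]) ?_ ?_ hx (by simp [hx2])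
      · rintro _ ⟨i, hi, rfl⟩
        exact ⟨i, hi, inv_eq_of_mul_eq_one_left (A1 i (by omega))⟩
      · rintro _ ⟨i, hi, rfl⟩ x hx
        have e := htv i (by omega) x
        simp only [Set.mem_ofPred_eq] at hx
        simp only [MonoidHom.coe_snd, Set.mem_ofPred_eq]
        change ((t i x : Fin n) : ℕ) ≤ k ∧ A i • d (k - x) = d (k - (t i x : Fin n))
        rw [e]
        split_ifs with c1 c2
        · refine ⟨by omega, ?_⟩
          obtain ⟨q, hq⟩ : ∃ q, k - (x : ℕ) = q + 1 := ⟨k - x - 1, by omega⟩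
          have e2 : k - q - 1 = i := by omega
          have e3 : k - (i + 1) = q := by omega
          rw [hq, dS, e2, e3, ← mul_smul, A1 i (by omega), one_smul]
        · refine ⟨by omega, ?_⟩
          have e2 : k - i = (k - x) + 1 := by omega
          have e3 : k - (k - (x : ℕ)) - 1 = i := by omega
          rw [e2, dS, e3]
        · refine ⟨hx, ?_⟩
          rcases Nat.lt_or_ge (i + 1) x with h | h
          · exact low _ (by omega) i (by omega)
          · exact high _ (by omega) i (by omega) (by omega)
  let f : Γ n →* Perm (Fin n) := (MonoidHom.snd M (Perm (Fin n))).comp (Γ n).subtype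
  have finj : Function.Injective f := by
    rw [injective_iff_map_eq_one]
    intro x hx
    exact Subtype.ext (inj n le_rfl x x.2 hx)
  have fA : ∀ i (h : i + 1 < n), f ⟨A i, Subgroup.subset_closure ⟨i, h, rfl⟩⟩ = t i :=
    fun i h => rfl
  have fsurj : Function.Surjective f := by
    rw [← MonoidHom.range_eq_top]
    rcases n with _ | n
    · exact Subsingleton.elim _ _
    · rw [eq_top_iff, ← Subgroup.toSubmonoid_le, Subgroup.top_toSubmonoid,
        ← Perm.mclosure_swap_castSucc_succ, Submonoid.closure_le]
      rintro _ ⟨i, rfl⟩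
      refine ⟨⟨A i, Subgroup.subset_closure ⟨i, by omega, rfl⟩⟩, ?_⟩
      rw [fA i (by omega), ht i (by omega)]
      rfl
  let E := MulEquiv.ofBijective f ⟨finj, fsurj⟩
  refine ⟨((MonoidHom.fst M (Perm (Fin n))).comp (Γ n).subtype).comp E.symm.toMonoidHom, ?_⟩
  intro i h
  have : E.symm (t i) = ⟨A i, Subgroup.subset_closure ⟨i, h, rfl⟩⟩ := by
    rw [MulEquiv.symm_apply_eq]; exact (fA i h).symm
  rw [ht i h] at this
  simp [this, A]

/-! ### Systems of transvections and labelled cosets -/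


theorem card_symmDiff_add {α : Type*} [DecidableEq α] (u v : Finset α) :
    (u ∆ v).card + 2 * (u ∩ v).card = u.card + v.card := by
  have h1 : (u ∆ v).card = (u \ v).card + (v \ u).card :=
    Finset.card_union_of_disjoint disjoint_sdiff_sdiff
  have h2 := Finset.card_sdiff_add_card_inter u v
  have h3 := Finset.card_sdiff_add_card_inter v u
  rw [Finset.inter_comm v u] at h3
  omega

theorem card_inter_symmDiff {α : Type*} [DecidableEq α] (I u v : Finset α) :
    (I ∩ (u ∆ v)).card % 2 = ((I ∩ u).card + (I ∩ v).card) % 2 := by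
  have h := card_symmDiff_add (I ∩ u) (I ∩ v)
  have e : I ∩ (u ∆ v) = (I ∩ u) ∆ (I ∩ v) := by
    ext x; simp only [Finset.mem_inter, Finset.mem_symmDiff]; tauto
  rw [e]; omega

theorem map_perm_mul {α : Type*} (σ τ : Perm α) (v : Finset α) :
    (v.map τ.toEmbedding).map σ.toEmbedding = v.map (σ * τ).toEmbedding := by
  rw [Finset.map_map]; rfl

theorem map_perm_symmDiff {α : Type*} [DecidableEq α] (σ : Perm α) (u v : Finset α) :
    (u ∆ v).map σ.toEmbedding = u.map σ.toEmbedding ∆ v.map σ.toEmbedding := by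
  ext x; simp only [Finset.mem_map_equiv, Finset.mem_symmDiff]

theorem map_perm_inter {α : Type*} [DecidableEq α] (σ : Perm α) (u v : Finset α) :
    (u ∩ v).map σ.toEmbedding = u.map σ.toEmbedding ∩ v.map σ.toEmbedding := by
  ext x; simp only [Finset.mem_map_equiv, Finset.mem_inter]

theorem map_swap_of_iff {α : Type*} [DecidableEq α] {x y : α} {v : Finset α}
    (h : x ∈ v ↔ y ∈ v) : v.map (swap x y).toEmbedding = v := by
  ext z
  simp only [Finset.mem_map_equiv, symm_swap, swap_apply_def]
  split_ifs with h1 h2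
  · rw [h1, h]
  · rw [h2, h]
  · rfl

theorem map_perm_subset {α : Type*} {σ : Perm α} {J v : Finset α}
    (hσ : ∀ x ∉ J, σ x = x) (hv : v ⊆ J) : v.map σ.toEmbedding ⊆ J := by
  intro x hx
  by_contra hxJ
  rw [Finset.mem_map_equiv] at hx
  have : σ.symm x = x := by rw [symm_apply_eq]; exact (hσ x hxJ).symm
  rw [this] at hx
  exact hxJ (hv hx)

theorem exists_exchange {α : Type*} [DecidableEq α] {K L : Finset α} (hK : K.card = 4)
    (hL : L.card = 4) (h : (K ∩ L).card = 3) :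
    ∃ T x y, T.card = 3 ∧ x ∉ T ∧ y ∉ T ∧ x ≠ y ∧ K = insert x T ∧ L = insert y T := by
  have h1 := Finset.card_sdiff_add_card_inter K L
  have h2 := Finset.card_sdiff_add_card_inter L K
  rw [Finset.inter_comm L K] at h2
  obtain ⟨x, hx⟩ := Finset.card_eq_one.1 (show (K \ L).card = 1 by omega)
  obtain ⟨y, hy⟩ := Finset.card_eq_one.1 (show (L \ K).card = 1 by omega)
  have hx' : ∀ z, (z ∈ K ∧ z ∉ L) ↔ z = x := fun z => by
    simpa using Finset.ext_iff.1 hx z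
  have hy' : ∀ z, (z ∈ L ∧ z ∉ K) ↔ z = y := fun z => by
    simpa using Finset.ext_iff.1 hy z
  have hxx := (hx' x).2 rfl
  have hyy := (hy' y).2 rfl
  refine ⟨K ∩ L, x, y, h, by simp [hxx], by simp [hyy], ?_, ?_, ?_⟩
  · rintro rfl; exact hxx.2 hyy.1
  · ext z; have := hx' z; simp only [Finset.mem_insert, Finset.mem_inter]; tauto
  · ext z; have := hy' z; simp only [Finset.mem_insert, Finset.mem_inter]; tauto

/-- A system of transvections: a group `M` with a homomorphism `s` from the permutations of `α` and
elements `B I`, for `I` a `4`-subset of `α`, satisfying the obvious relations between permutation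
matrices and the transvections `x ↦ x + (r · x) r` along the indicator vectors `r` of the `I`. If
`I` and `K` meet in three letters, then the product of the three transvections `K`, `I`, `K` is the
transposition of the remaining two letters (`braid`). The values of `B` at other subsets are
irrelevant. -/
structure TSys (α M : Type*) [DecidableEq α] [Group M] where
  s : Perm α →* M
  B : Finset α → M
  conj : ∀ σ I, I.card = 4 → s σ * B I = B (I.map σ.toEmbedding) * s σ
  sq : ∀ I, I.card = 4 → B I * B I = 1
  braid : ∀ T x y, T.card = 3 → x ∉ T → y ∉ T → x ≠ y →
    B (insert x T) * B (insert y T) = B (insert y T) * s (swap x y)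

namespace TSys

variable {α M : Type*} [DecidableEq α] [Group M] (S : TSys α M)

/-- The permutations supported in `J` and the transvections along `4`-subsets of `J`. -/
def gens (J : Finset α) : Set M :=
  {m | ∃ σ : Perm α, (∀ x ∉ J, σ x = x) ∧ m = S.s σ} ∪
  {m | ∃ I : Finset α, I.card = 4 ∧ I ⊆ J ∧ m = S.B I}

/-- The subgroup of `M` belonging to the letters in `J`. -/
def N (J : Finset α) : Subgroup M := Subgroup.closure (S.gens J)

/-- For a `4`-set `I` and a `3`-set `w` disjoint from it, `B I` is a product of permutations of
`I ∪ w` preserving `I` and `w`, and of transvections along `4`-subsets of `I ∪ w` meeting `w` in two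
letters. This is the one consequence of relator (6) that is needed. -/
def Seven : Prop := ∀ I w : Finset α, I.card = 4 → w.card = 3 → Disjoint I w →
  S.B I ∈ Subgroup.closure
    ({m | ∃ σ : Perm α, I.map σ.toEmbedding = I ∧ w.map σ.toEmbedding = w ∧
        (∀ x ∉ I ∪ w, σ x = x) ∧ m = S.s σ} ∪
     {m | ∃ K : Finset α, K.card = 4 ∧ K ⊆ I ∪ w ∧ (K ∩ w).card = 2 ∧ m = S.B K})

theorem s_mem_N {J : Finset α} {σ : Perm α} (h : ∀ x ∉ J, σ x = x) : S.s σ ∈ S.N J :=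
  Subgroup.subset_closure (Or.inl ⟨σ, h, rfl⟩)

theorem B_mem_N {J I : Finset α} (h4 : I.card = 4) (h : I ⊆ J) : S.B I ∈ S.N J :=
  Subgroup.subset_closure (Or.inr ⟨I, h4, h, rfl⟩)

theorem gens_inv {J : Finset α} : ∀ m ∈ S.gens J, m⁻¹ ∈ S.gens J := by
  rintro _ (⟨σ, hσ, rfl⟩ | ⟨I, h4, hI, rfl⟩)
  · refine Or.inl ⟨σ⁻¹, fun x hx => ?_, by simp⟩
    rw [Perm.inv_eq_iff_eq, hσ x hx]
  · exact Or.inr ⟨I, h4, hI, inv_eq_of_mul_eq_one_left (S.sq I h4)⟩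

/-- A partial labelling `c` of odd subsets of `J` by cosets of `N J'`, where `J = insert p J'`. The
set `{p}` has label `N J'`, and on sets of at most `2 * k + 1` letters, other than `J` itself unless
`J` is a singleton, the generators of `N J` act on labels as they act on vectors. Of the pairs
`v`, `v ∆ I` exchanged by `B I` only the larger member `v` is mentioned; the equation for the other
member follows since `B I` is an involution. -/
def Good (J J' : Finset α) (p : α) (k : ℕ) (c : Finset α → M ⧸ S.N J') : Prop :=
  c {p} = ((1 : M) : M ⧸ S.N J') ∧
  ∀ v ⊆ J, v.card % 2 = 1 → v.card ≤ 2 * k + 1 → (v.card = 1 ∨ v ≠ J) →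
    (∀ σ : Perm α, (∀ x ∉ J, σ x = x) → S.s σ • c v = c (v.map σ.toEmbedding)) ∧
    (∀ I ⊆ J, I.card = 4 → (I ∩ v).card % 2 = 0 → S.B I • c v = c v) ∧
    (∀ I ⊆ J, I.card = 4 → (I ∩ v).card = 3 → S.B I • c v = c (v ∆ I))

variable {S}

theorem mk_mem {N : Subgroup M} {m m' : M} (h : m⁻¹ * m' ∈ N) :
    (m : M ⧸ N) = (m' : M ⧸ N) := QuotientGroup.eq.2 h

theorem smul_mk_eq {N : Subgroup M} {g m m' : M} (h : (g * m)⁻¹ * m' ∈ N) :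
    g • (m : M ⧸ N) = (m' : M ⧸ N) := QuotientGroup.eq.2 h

theorem card_insert_inter {x : α} {T v : Finset α} (hx : x ∉ T) :
    (insert x T ∩ v).card = (T ∩ v).card + if x ∈ v then 1 else 0 := by
  split_ifs with h
  · rw [Finset.insert_inter_of_mem h, Finset.card_insert_of_notMem (by simp [hx])]
  · rw [Finset.insert_inter_of_notMem h, add_zero]

/-- A singleton `{i}` is labelled by the coset of the transposition of `p` and `i`. -/
theorem good_zero {J J' : Finset α} {p : α} (hJ : J = insert p J') :
    ∃ c, S.Good J J' p 0 c := by
  classical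
  let c : Finset α → M ⧸ S.N J' := fun v =>
    if h : ∃ i, v = {i} then (S.s (swap p h.choose) : M) else ((1 : M) : M ⧸ S.N J')
  have hc : ∀ i, c {i} = (S.s (swap p i) : M) := by
    intro i
    have h : ∃ j, ({i} : Finset α) = {j} := ⟨i, rfl⟩
    have : h.choose = i := (Finset.singleton_injective h.choose_spec).symm
    simp only [c, dif_pos h, this]
  refine ⟨c, by rw [hc, swap_self, ← Perm.one_def, map_one], fun v hv hodd hcard _ => ?_⟩
  obtain ⟨i, rfl⟩ := Finset.card_eq_one.1 (show v.card = 1 by omega)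
  have hpJ : p ∈ J := by simp [hJ]
  have mem' : ∀ {x}, x ∈ J → x ≠ p → x ∈ J' := fun hx hne => by
    rw [hJ, Finset.mem_insert] at hx; exact hx.resolve_left hne
  have swap_fix : ∀ j ∈ J, ∀ x ∉ J, swap p j x = x := fun j hj x hx =>
    swap_apply_of_ne_of_ne (by rintro rfl; exact hx hpJ) (by rintro rfl; exact hx hj)
  refine ⟨fun σ hσ => ?_, fun I hI h4 hev => ?_, fun I hI h4 h3 => ?_⟩
  · have hσi : σ i ∈ J := by
      have := map_perm_subset hσ hv
      simpa using this
    rw [Finset.singleton_subset_iff] at hv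
    rw [Finset.map_singleton, hc, hc]
    refine smul_mk_eq ?_
    rw [← map_mul, ← map_inv, ← map_mul]
    refine S.s_mem_N fun x hx => ?_
    rw [Perm.mul_apply, Perm.inv_eq_iff_eq, Perm.mul_apply]
    by_cases hxp : x = p
    · subst hxp; simp
    · have hxJ : x ∉ J := fun h => hx (mem' h hxp)
      rw [swap_fix i hv x hxJ, hσ x hxJ]
      exact swap_fix (σ i) hσi x hxJ
  · rw [Finset.singleton_subset_iff] at hv
    have hiI : i ∉ I := by
      intro h
      rw [Finset.inter_singleton_of_mem h] at hev
      simp at hev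
    rw [hc]
    refine smul_mk_eq ?_
    have hcon := S.conj (swap p i) (I.map (swap p i).toEmbedding) (by simpa using h4)
    rw [map_perm_mul, swap_mul_self] at hcon
    have e1 : I.map (1 : Perm α).toEmbedding = I := by ext a; rw [Finset.mem_map_equiv]; rfl
    rw [e1] at hcon
    rw [← hcon, mul_inv_rev, mul_assoc, inv_mul_cancel, mul_one]
    refine inv_mem (S.B_mem_N (by simpa using h4) fun x hx => mem' ?_ ?_)
    · exact map_perm_subset (swap_fix i hv) hI hx
    · rintro rfl
      rw [Finset.mem_map_equiv, symm_swap, swap_apply_left] at hx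
      exact hiI hx
  · have := Finset.card_le_card (Finset.inter_subset_right (s₁ := I) (s₂ := {i}))
    rw [h3] at this
    simp at this

/-- The transvection along a `4`-set meeting `v` in three letters removes these and adds the fourth,
which lowers the size of `v` by two. -/
theorem lower {J v K : Finset α} {k : ℕ} (hv : v ⊆ J) (hvc : v.card = 2 * k + 3)
    (hK : K ⊆ J) (hK4 : K.card = 4) (hKv : (K ∩ v).card = 3) :
    v ∆ K ⊆ J ∧ (v ∆ K).card = 2 * k + 1 ∧ v ∆ K ≠ J := by
  have h := card_symmDiff_add v K
  rw [Finset.inter_comm] at h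
  refine ⟨fun x hx => ?_, by omega, fun h' => ?_⟩
  · rcases Finset.mem_symmDiff.1 hx with h | h
    · exact hv h.1
    · exact hK h.1
  · obtain ⟨x, hx⟩ := Finset.card_pos.1 (show 0 < (K ∩ v).card by omega)
    rw [Finset.mem_inter] at hx
    have := hK hx.1
    rw [← h', Finset.mem_symmDiff] at this
    tauto

theorem swap_fix {J : Finset α} {x y : α} (hx : x ∈ J) (hy : y ∈ J) :
    ∀ z ∉ J, swap x y z = z := fun z hz =>
  swap_apply_of_ne_of_ne (by rintro rfl; exact hz hx) (by rintro rfl; exact hz hy)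

theorem map_swap_insert {T : Finset α} {x y : α} (hx : x ∉ T) (hy : y ∉ T) :
    (insert x T).map (swap x y).toEmbedding = insert y T := by
  rw [Finset.map_insert, map_swap_of_iff (by simp [hx, hy])]
  simp

/-- Two `4`-sets which lower `v` and meet in three letters induce the same label on `v`. -/
theorem Good.exchange {J J' : Finset α} {p : α} {k : ℕ} {c : Finset α → M ⧸ S.N J'}
    (hc : S.Good J J' p k c) {v K L : Finset α} (hv : v ⊆ J) (hvc : v.card = 2 * k + 3)
    (hK : K ⊆ J) (hK4 : K.card = 4) (hKv : (K ∩ v).card = 3)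
    (hL : L ⊆ J) (hL4 : L.card = 4) (hLv : (L ∩ v).card = 3) (hKL : (K ∩ L).card = 3) :
    S.B K • c (v ∆ K) = S.B L • c (v ∆ L) := by
  obtain ⟨T, x, y, hT, hx, hy, hxy, hKe, hLe⟩ := exists_exchange hK4 hL4 hKL
  obtain ⟨u1, u2, u3⟩ := lower hv hvc hK hK4 hKv
  have hxy' : x ∈ v ↔ y ∈ v := by
    rw [hKe, card_insert_inter hx] at hKv
    rw [hLe, card_insert_inter hy] at hLv
    by_cases h1 : x ∈ v <;> by_cases h2 : y ∈ v <;> simp [h1, h2] at * <;> omega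
  have hσ : ∀ z ∉ J, swap x y z = z := swap_fix (hK (by simp [hKe])) (hL (by simp [hLe]))
  obtain ⟨g1, g2, -⟩ := hc.2 _ u1 (by omega) (by omega) (Or.inr u3)
  have hmap : K.map (swap x y).toEmbedding = L := by rw [hKe, hLe, map_swap_insert hx hy]
  have e1 := g1 _ hσ
  rw [map_perm_symmDiff, hmap, map_swap_of_iff hxy'] at e1
  have e2 := S.conj (swap x y) K hK4
  rw [hmap] at e2
  have e3 := S.braid T y x hT hy hx hxy.symm
  rw [← hKe, ← hLe, swap_comm] at e3
  have e4 : S.s (swap x y) * S.B K = S.B K * S.B L := by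
    have : S.s (swap x y) = S.B K * (S.B L * S.B K) := by
      rw [e3, ← mul_assoc, S.sq K hK4, one_mul]
    rw [this, mul_assoc, mul_assoc, S.sq K hK4, mul_one]
  rw [← e1, ← mul_smul, ← e2, e4, mul_smul, g2 L hL hL4 ?_]
  have := card_inter_symmDiff L v K
  rw [Finset.inter_comm K L] at hKL
  omega

/-- Any two `4`-sets which lower `v` induce the same label on `v`: they are joined by a chain of
`4`-sets with the same property, consecutive ones meeting in three letters. -/
theorem Good.wd {J J' : Finset α} {p : α} {k : ℕ} {c : Finset α → M ⧸ S.N J'}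
    (hc : S.Good J J' p k c) {v : Finset α} (hv : v ⊆ J) (hvc : v.card = 2 * k + 3) (n : ℕ) :
    ∀ K L : Finset α, K ⊆ J → K.card = 4 → (K ∩ v).card = 3 →
    L ⊆ J → L.card = 4 → (L ∩ v).card = 3 → (K \ L).card = n →
    S.B K • c (v ∆ K) = S.B L • c (v ∆ L) := by
  induction n with
  | zero =>
    intro K L hK hK4 hKv hL hL4 hLv hn
    have : K ⊆ L := by rwa [Finset.card_eq_zero, Finset.sdiff_eq_empty_iff_subset] at hn
    rw [Finset.eq_of_subset_of_card_le this (by omega)]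
  | succ n ih =>
    intro K L hK hK4 hKv hL hL4 hLv hn
    obtain ⟨x, y, hxK, hxL, hyL, hyK, hxy⟩ : ∃ x y, x ∈ K ∧ x ∉ L ∧ y ∈ L ∧ y ∉ K ∧
        (x ∈ v ↔ y ∈ v) := by
      -- `K \ L` and `L \ K` have as many points inside `v`, and as many outside
      obtain ⟨x, hx⟩ := Finset.card_pos.1 (show 0 < (K \ L).card by omega)
      rw [Finset.mem_sdiff] at hx
      by_cases hxv : x ∈ v
      · have h1 : 0 < ((K ∩ v) \ (L ∩ v)).card :=
          Finset.card_pos.2 ⟨x, by simp [hx, hxv]⟩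
        have h2 := Finset.card_sdiff_add_card_inter (K ∩ v) (L ∩ v)
        have h3 := Finset.card_sdiff_add_card_inter (L ∩ v) (K ∩ v)
        rw [Finset.inter_comm (L ∩ v)] at h3
        obtain ⟨y, hy⟩ := Finset.card_pos.1 (show 0 < ((L ∩ v) \ (K ∩ v)).card by omega)
        simp only [Finset.mem_sdiff, Finset.mem_inter, not_and] at hy
        exact ⟨x, y, hx.1, hx.2, hy.1.1, fun h => hy.2 h hy.1.2, by simp [hxv, hy.1.2]⟩
      · have h1 : 0 < ((K \ v) \ (L \ v)).card :=
          Finset.card_pos.2 ⟨x, by simp [hx, hxv]⟩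
        have h2 := Finset.card_sdiff_add_card_inter (K \ v) (L \ v)
        have h3 := Finset.card_sdiff_add_card_inter (L \ v) (K \ v)
        have h4 := Finset.card_sdiff_add_card_inter K v
        have h5 := Finset.card_sdiff_add_card_inter L v
        rw [Finset.inter_comm (L \ v)] at h3
        obtain ⟨y, hy⟩ := Finset.card_pos.1 (show 0 < ((L \ v) \ (K \ v)).card by omega)
        simp only [Finset.mem_sdiff, not_and, not_not] at hy
        refine ⟨x, y, hx.1, hx.2, hy.1.1, fun h => hy.1.2 (hy.2 h), by simp [hxv, hy.1.2]⟩
    have hyT : y ∉ K.erase x := fun h => hyK (Finset.mem_of_mem_erase h)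
    have hxT : x ∉ K.erase x := by simp
    have hKe : K = insert x (K.erase x) := (Finset.insert_erase hxK).symm
    have hT : (K.erase x).card = 3 := by rw [Finset.card_erase_of_mem hxK, hK4]
    have hK1 : insert y (K.erase x) ⊆ J :=
      Finset.insert_subset (hL hyL) ((Finset.erase_subset _ _).trans hK)
    have hK14 : (insert y (K.erase x)).card = 4 := by
      rw [Finset.card_insert_of_notMem hyT, hT]
    have hK1v : (insert y (K.erase x) ∩ v).card = 3 := by
      rw [hKe, card_insert_inter hxT] at hKv
      rw [card_insert_inter hyT]
      simpa [hxy] using hKv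
    have hKK1 : (K ∩ insert y (K.erase x)).card = 3 := by
      rw [Finset.inter_insert_of_notMem hyK, Finset.inter_eq_right.2 (Finset.erase_subset _ _), hT]
    rw [hc.exchange hv hvc hK hK4 hKv hK1 hK14 hK1v hKK1]
    refine ih _ _ hK1 hK14 hK1v hL hL4 hLv ?_
    have : insert y (K.erase x) \ L = (K \ L).erase x := by
      ext z
      simp only [Finset.mem_sdiff, Finset.mem_insert, Finset.mem_erase]
      constructor
      · rintro ⟨rfl | h, h'⟩
        · exact absurd hyL h'
        · exact ⟨h.1, h.2, h'⟩
      · rintro ⟨h1, h2, h3⟩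
        exact ⟨Or.inr ⟨h1, h2⟩, h3⟩
    rw [this, Finset.card_erase_of_mem (by simp [hxK, hxL]), hn]
    rfl

end TSys

/-! ### Extension of the labelling and faithfulness -/

namespace TSys

variable {α M : Type*} [DecidableEq α] [Group M] {S : TSys α M}

theorem exists_lowering {J v : Finset α} {k : ℕ} (hv : v ⊆ J) (hvc : v.card = 2 * k + 3)
    (hne : v ≠ J) : ∃ K, K ⊆ J ∧ K.card = 4 ∧ (K ∩ v).card = 3 := by
  obtain ⟨T, hT, hT3⟩ := Finset.exists_subset_card_eq (show 3 ≤ v.card by omega)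
  obtain ⟨z, hzJ, hzv⟩ := Finset.exists_of_ssubset (hv.ssubset_of_ne hne)
  have hzT : z ∉ T := fun h => hzv (hT h)
  refine ⟨insert z T, Finset.insert_subset hzJ (hT.trans hv), ?_, ?_⟩
  · rw [Finset.card_insert_of_notMem hzT, hT3]
  · rw [card_insert_inter hzT, if_neg hzv, Finset.inter_eq_left.2 hT, hT3]

/-- A labelling of the sets of at most `2 * k + 1` letters extends to those of `2 * k + 3` letters:
the label of `v` is obtained from that of `v ∆ K` by applying `B K`, for any `4`-set `K` meeting `v`
in three letters. The transvections along `4`-sets disjoint from `v` fix this label by `Seven`;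
those along `4`-sets meeting `v` in two or four letters do so by the `braid` relation. -/
theorem good_succ (h7 : S.Seven) {J J' : Finset α} {p : α} {k : ℕ} {c : Finset α → M ⧸ S.N J'}
    (hc : S.Good J J' p k c) : ∃ c', S.Good J J' p (k + 1) c' := by
  classical
  let c' : Finset α → M ⧸ S.N J' := fun v =>
    if h : v.card = 2 * k + 3 ∧ ∃ K, K ⊆ J ∧ K.card = 4 ∧ (K ∩ v).card = 3
    then S.B h.2.choose • c (v ∆ h.2.choose) else c v
  have hlow : ∀ v, v.card ≠ 2 * k + 3 → c' v = c v := fun v h => by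
    simp only [c']; rw [dif_neg (fun h' => h h'.1)]
  have htop : ∀ v, v ⊆ J → v.card = 2 * k + 3 → ∀ K, K ⊆ J → K.card = 4 → (K ∩ v).card = 3 →
      c' v = S.B K • c (v ∆ K) := by
    intro v hv hvc K hK hK4 hKv
    have h : v.card = 2 * k + 3 ∧ ∃ K, K ⊆ J ∧ K.card = 4 ∧ (K ∩ v).card = 3 :=
      ⟨hvc, K, hK, hK4, hKv⟩
    simp only [c']
    rw [dif_pos h]
    obtain ⟨h1, h2, h3⟩ := h.2.choose_spec
    exact hc.wd hv hvc _ _ _ h1 h2 h3 hK hK4 hKv rfl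
  refine ⟨c', by rw [hlow _ (by simp)]; exact hc.1, fun v hv hodd hcard hne => ?_⟩
  by_cases hvc : v.card = 2 * k + 3
  swap
  · obtain ⟨g1, g2, g3⟩ := hc.2 v hv hodd (by omega) hne
    refine ⟨fun σ hσ => ?_, fun I hI h4 hev => ?_, fun I hI h4 h3 => ?_⟩
    · rw [hlow v hvc, hlow _ (by simpa using hvc), g1 σ hσ]
    · rw [hlow v hvc, g2 I hI h4 hev]
    · have := card_symmDiff_add v I
      rw [Finset.inter_comm] at this
      rw [hlow v hvc, hlow _ (by omega), g3 I hI h4 h3]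
  have hne : v ≠ J := hne.resolve_left (by omega)
  have hS : ∀ σ : Perm α, (∀ x ∉ J, σ x = x) → S.s σ • c' v = c' (v.map σ.toEmbedding) := by
    intro σ hσ
    obtain ⟨K, hK, hK4, hKv⟩ := exists_lowering hv hvc hne
    obtain ⟨u1, u2, u3⟩ := lower hv hvc hK hK4 hKv
    rw [htop v hv hvc K hK hK4 hKv, htop (v.map σ.toEmbedding) (map_perm_subset hσ hv)
      (by simpa using hvc) (K.map σ.toEmbedding) (map_perm_subset hσ hK) (by simpa using hK4)
      (by rw [← map_perm_inter]; simpa using hKv), ← map_perm_symmDiff,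
      ← (hc.2 _ u1 (by omega) (by omega) (Or.inr u3)).1 σ hσ, ← mul_smul, ← mul_smul,
      S.conj σ K hK4]
  -- `B I` fixes the new label as soon as some lowering `4`-set is a neighbour of `I`
  have hnb : ∀ I o z, I ⊆ J → I.card = 4 → (I ∩ v).card % 2 = 0 → o ∈ I → z ∉ I → z ∈ J →
      (insert z (I.erase o) ∩ v).card = 3 → S.B I • c' v = c' v := by
    intro I o z hI h4 hev ho hz hzJ h3
    have hzT : z ∉ I.erase o := fun h => hz (Finset.mem_of_mem_erase h)
    have hoT : o ∉ I.erase o := by simp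
    have hoz : o ≠ z := by rintro rfl; exact hz ho
    have hIe : I = insert o (I.erase o) := (Finset.insert_erase ho).symm
    have hT : (I.erase o).card = 3 := by rw [Finset.card_erase_of_mem ho, h4]
    have hK : insert z (I.erase o) ⊆ J :=
      Finset.insert_subset hzJ ((Finset.erase_subset _ _).trans hI)
    have hK4 : (insert z (I.erase o)).card = 4 := by
      rw [Finset.card_insert_of_notMem hzT, hT]
    obtain ⟨u1, u2, u3⟩ := lower hv hvc hK hK4 h3
    rw [htop v hv hvc _ hK hK4 h3, ← mul_smul]
    have hb := S.braid (I.erase o) o z hT hoT hzT hoz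
    rw [← hIe] at hb
    rw [hb, mul_smul, (hc.2 _ u1 (by omega) (by omega) (Or.inr u3)).1 _
      (swap_fix (hI ho) hzJ), map_swap_of_iff]
    have hov : o ∈ v ↔ z ∉ v := by
      rw [hIe, card_insert_inter hoT] at hev
      rw [card_insert_inter hzT] at h3
      by_cases h1 : o ∈ v <;> by_cases h2 : z ∈ v <;> simp [h1, h2] at * <;> omega
    simp only [Finset.mem_symmDiff, Finset.mem_insert, Finset.mem_erase]
    tauto
  have h2 : ∀ I ⊆ J, I.card = 4 → (I ∩ v).card = 2 → S.B I • c' v = c' v := by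
    intro I hI h4 h2
    have e1 := Finset.card_sdiff_add_card_inter I v
    have e2 := Finset.card_sdiff_add_card_inter v I
    rw [Finset.inter_comm] at e2
    obtain ⟨o, ho⟩ := Finset.card_pos.1 (show 0 < (I \ v).card by omega)
    obtain ⟨z, hz⟩ := Finset.card_pos.1 (show 0 < (v \ I).card by omega)
    rw [Finset.mem_sdiff] at ho hz
    refine hnb I o z hI h4 (by omega) ho.1 hz.2 (hv hz.1) ?_
    rw [card_insert_inter (fun h => hz.2 (Finset.mem_of_mem_erase h)), if_pos hz.1]
    have := card_insert_inter (v := v) (Finset.notMem_erase o I)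
    rw [Finset.insert_erase ho.1, if_neg ho.2] at this
    omega
  refine ⟨hS, fun I hI h4 hev => ?_, fun I hI h4 h3 => ?_⟩
  · have hle : (I ∩ v).card ≤ 4 := h4 ▸ Finset.card_le_card Finset.inter_subset_left
    obtain h | h | h : (I ∩ v).card = 0 ∨ (I ∩ v).card = 2 ∨ (I ∩ v).card = 4 := by omega
    · -- the disjoint case, from the relation inside the seven points `I ∪ w`
      have hdis : Disjoint I v := by
        rwa [Finset.card_eq_zero, ← Finset.disjoint_iff_inter_eq_empty] at h
      obtain ⟨w, hwv, hw3⟩ := Finset.exists_subset_card_eq (show 3 ≤ v.card by omega)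
      have hIw : I ∪ w ⊆ J := Finset.union_subset hI (hwv.trans hv)
      have hmem := h7 I w h4 hw3 (hdis.mono_right hwv)
      have hle : Subgroup.closure
          ({m | ∃ σ : Perm α, I.map σ.toEmbedding = I ∧ w.map σ.toEmbedding = w ∧
            (∀ x ∉ I ∪ w, σ x = x) ∧ m = S.s σ} ∪
           {m | ∃ K : Finset α, K.card = 4 ∧ K ⊆ I ∪ w ∧ (K ∩ w).card = 2 ∧ m = S.B K})
          ≤ MulAction.stabilizer M (c' v) := by
        rw [Subgroup.closure_le]
        rintro _ (⟨σ, hσI, hσw, hσ, rfl⟩ | ⟨K, hK4, hK, hKw, rfl⟩)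
        · change S.s σ • c' v = c' v
          rw [hS σ fun x hx => hσ x fun h => hx (hIw h)]
          congr 1
          have hsub : v.map σ.toEmbedding ⊆ v := by
            intro x hx
            by_cases hxw : x ∈ w
            · exact hwv hxw
            by_cases hxI : x ∈ I
            · rw [← hσI] at hxI
              rw [Finset.mem_map_equiv] at hx hxI
              exact absurd hx (Finset.disjoint_left.1 hdis hxI)
            · have : σ.symm x = x := by
                rw [symm_apply_eq]; exact (hσ x (by simp [hxw, hxI])).symm
              rwa [Finset.mem_map_equiv, this] at hx
          exact Finset.eq_of_subset_of_card_le hsub (by simp)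
        · change S.B K • c' v = c' v
          refine h2 K (hK.trans hIw) hK4 ?_
          rw [← hKw]
          congr 1
          ext x
          simp only [Finset.mem_inter]
          refine ⟨fun ⟨h1, h2⟩ => ⟨h1, ?_⟩, fun ⟨h1, h2⟩ => ⟨h1, hwv h2⟩⟩
          exact (Finset.mem_union.1 (hK h1)).resolve_left
            fun h => Finset.disjoint_left.1 hdis h h2
      exact hle hmem
    · exact h2 I hI h4 h
    · have hIv : I ⊆ v := by
        rw [← Finset.inter_eq_left]
        exact Finset.eq_of_subset_of_card_le Finset.inter_subset_left (by omega)
      obtain ⟨o, ho⟩ := Finset.card_pos.1 (show 0 < I.card by omega)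
      obtain ⟨z, hzJ, hzv⟩ := Finset.exists_of_ssubset (hv.ssubset_of_ne hne)
      refine hnb I o z hI h4 (by omega) ho (fun h => hzv (hIv h)) hzJ ?_
      rw [card_insert_inter (fun h => hzv (hIv (Finset.mem_of_mem_erase h))), if_neg hzv]
      have := card_insert_inter (v := v) (Finset.notMem_erase o I)
      rw [Finset.insert_erase ho, if_pos (hIv ho)] at this
      omega
  · obtain ⟨u1, u2, u3⟩ := lower hv hvc hI h4 h3
    rw [hlow (v ∆ I) (by omega), htop v hv hvc I hI h4 h3, ← mul_smul, S.sq I h4, one_smul]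

theorem exists_good (h7 : S.Seven) {J J' : Finset α} {p : α} (hJ : J = insert p J') (k : ℕ) :
    ∃ c, S.Good J J' p k c := by
  induction k with
  | zero => exact good_zero hJ
  | succ k ih => obtain ⟨c, hc⟩ := ih; exact good_succ h7 hc

/-- Faithfulness of the action on vectors: in the presence of `Seven`, an element of `N J` acting
trivially on the subsets of `α`, seen as vectors over `ℤ/2`, is trivial. Letters are removed from
`J` one at a time, by means of `mem_of_equivariant` and the labelling of `exists_good`. -/
theorem eq_one_of_act (h7 : S.Seven) (act : M →* Perm (Finset α))
    (hs : ∀ σ v, act (S.s σ) v = v.map σ.toEmbedding)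
    (hB : ∀ I v, I.card = 4 → act (S.B I) v = if (I ∩ v).card % 2 = 0 then v else v ∆ I)
    (J : Finset α) : ∀ m ∈ S.N J, act m = 1 → m = 1 := by
  induction J using Finset.induction_on with
  | empty =>
    intro m hm _
    have hle : S.N ∅ ≤ ⊥ := by
      refine (Subgroup.closure_le _).2 ?_
      rintro _ (⟨σ, hσ, rfl⟩ | ⟨I, h4, hI, rfl⟩)
      · have : σ = 1 := by ext x; exact hσ x (by simp)
        simp [this]
      · rw [Finset.subset_empty.1 hI] at h4; simp at h4
    exact hle hm
  | insert p J' hp ih =>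
    intro m hm hact
    refine ih m ?_ hact
    set J := insert p J' with hJ
    obtain ⟨c, hc⟩ := exists_good h7 hJ J.card
    refine mem_of_equivariant act c {v | v ⊆ J ∧ v.card % 2 = 1 ∧ (v.card = 1 ∨ v ≠ J)}
      (x₀ := {p}) ⟨by simp [hJ], by simp, Or.inl (by simp)⟩ hc.1 S.gens_inv ?_ hm (by simp [hact])
    rintro m' hm' v ⟨hv, hodd, hne⟩
    obtain ⟨g1, g2, g3⟩ := hc.2 v hv hodd
      (by have := Finset.card_le_card hv; omega) hne
    rcases hm' with ⟨σ, hσ, rfl⟩ | ⟨I, h4, hI, rfl⟩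
    · rw [hs]
      refine ⟨⟨map_perm_subset hσ hv, by simpa using hodd, ?_⟩, g1 σ hσ⟩
      rcases hne with h | h
      · left; simpa using h
      · right
        intro h'
        have := congrArg Finset.card h'
        rw [Finset.card_map] at this
        exact h (Finset.eq_of_subset_of_card_le hv this.ge)
    · rw [hB I v h4]
      have hle : (I ∩ v).card ≤ 4 := h4 ▸ Finset.card_le_card Finset.inter_subset_left
      split_ifs with hev
      · exact ⟨⟨hv, hodd, hne⟩, g2 I hI h4 hev⟩
      have hu : v ∆ I ⊆ J := fun x hx => by
        rcases Finset.mem_symmDiff.1 hx with h | h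
        · exact hv h.1
        · exact hI h.1
      have huodd : (v ∆ I).card % 2 = 1 := by have := card_symmDiff_add v I; omega
      have hune : v ∆ I ≠ J := by
        intro h'
        obtain ⟨x, hx⟩ := Finset.card_pos.1 (show 0 < (I ∩ v).card by omega)
        rw [Finset.mem_inter] at hx
        have := hI hx.1
        rw [← h', Finset.mem_symmDiff] at this
        tauto
      refine ⟨⟨hu, huodd, Or.inr hune⟩, ?_⟩
      obtain h | h : (I ∩ v).card = 1 ∨ (I ∩ v).card = 3 := by omega
      · have := (hc.2 _ hu huodd (by have := Finset.card_le_card hu; omega)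
          (Or.inr hune)).2.2 I hI h4 ?_
        · rw [symmDiff_symmDiff_cancel_right] at this
          rw [← this, ← mul_smul, S.sq I h4, one_smul]
        · have e : I ∩ (v ∆ I) = I \ v := by
            ext x; simp only [Finset.mem_inter, Finset.mem_symmDiff, Finset.mem_sdiff]; tauto
          have := Finset.card_sdiff_add_card_inter I v
          rw [e]; omega
      · exact g3 I hI h4 h

end TSys

/-! ### Seven letters -/

namespace TSys

variable {α M : Type*} [DecidableEq α] [Group M] (S : TSys α M)

theorem swap_sq (x y : α) : S.s (swap x y) * S.s (swap x y) = 1 := by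
  rw [← map_mul, swap_mul_self, map_one]

/-- With `I = abcd`, `L = abce` and `Q = abdf`, the transvection along `abef` is `L (c f) L`;
conjugation by `I` turns `L` into `(d e)` and `(c f)` into `Q`, and `(d e) Q (d e)` is the
transvection along `abef` again. -/
theorem comm_of_distinct {a b c d e f : α} (h : [a, b, c, d, e, f].Nodup) :
    S.B {a, b, c, d} * S.B {a, b, e, f} = S.B {a, b, e, f} * S.B {a, b, c, d} := by
  simp only [List.nodup_cons, List.mem_cons, List.not_mem_nil, not_or, or_false] at h
  obtain ⟨⟨ab, ac, ad, ae, af⟩, ⟨bc, bd, be, bf⟩, ⟨cd, ce, cf⟩, ⟨de, df⟩, ef, -⟩ := h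
  have card3 : ∀ {x y z : α}, x ≠ y → x ≠ z → y ≠ z → ({x, y, z} : Finset α).card = 3 :=
    fun h1 h2 h3 => Finset.card_eq_three.2 ⟨_, _, _, h1, h2, h3, rfl⟩
  have i1 : ({a, b, c, d} : Finset α) = insert d {a, b, c} := by grind
  have i2 : ({a, b, c, d} : Finset α) = insert c {a, b, d} := by grind
  have i3 : ({a, b, e, f} : Finset α) = insert f {a, b, e} := by grind
  have i4 : ({a, b, c, e} : Finset α) = insert e {a, b, c} := by grind
  have i5 : ({a, b, c, e} : Finset α) = insert c {a, b, e} := by grind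
  have i6 : ({a, b, d, f} : Finset α) = insert f {a, b, d} := by grind
  have i7 : ({a, b, d, f} : Finset α) = insert d {a, b, f} := by grind
  have i8 : ({a, b, e, f} : Finset α) = insert e {a, b, f} := by grind
  have I4 : ({a, b, c, d} : Finset α).card = 4 := by
    rw [i1, Finset.card_insert_of_notMem (by grind), card3 ab ac bc]
  have L4 : ({a, b, c, e} : Finset α).card = 4 := by
    rw [i4, Finset.card_insert_of_notMem (by grind), card3 ab ac bc]
  have Q4 : ({a, b, d, f} : Finset α).card = 4 := by
    rw [i6, Finset.card_insert_of_notMem (by grind), card3 ab ad bd]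
  have e1 : S.B {a, b, e, f} * S.B {a, b, c, e} = S.B {a, b, c, e} * S.s (swap f c) := by
    rw [i3, i5]
    exact S.braid _ _ _ (card3 ab ae be) (by grind) (by grind) (Ne.symm cf)
  have e2 : S.B {a, b, c, d} * S.B {a, b, d, f} = S.B {a, b, d, f} * S.s (swap c f) := by
    rw [i2, i6]
    exact S.braid _ _ _ (card3 ab ad bd) (by grind) (by grind) cf
  have e3 : S.B {a, b, c, d} * S.B {a, b, c, e} = S.B {a, b, c, e} * S.s (swap d e) := by
    rw [i1, i4]
    exact S.braid _ _ _ (card3 ab ac bc) (by grind) (by grind) de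
  have e4 : S.s (swap c f) * S.B {a, b, c, d} = S.B {a, b, d, f} * S.s (swap c f) := by
    have := S.conj (swap c f) _ I4
    rwa [i2, map_swap_insert (by grind) (by grind), ← i2, ← i6] at this
  have e5 : S.s (swap d e) * S.B {a, b, c, d} = S.B {a, b, c, e} * S.s (swap d e) := by
    have := S.conj (swap d e) _ I4
    rwa [i1, map_swap_insert (by grind) (by grind), ← i1, ← i4] at this
  have e6 : S.s (swap d e) * S.B {a, b, d, f} = S.B {a, b, e, f} * S.s (swap d e) := by
    have := S.conj (swap d e) _ Q4
    rwa [i7, map_swap_insert (by grind) (by grind), ← i7, ← i8] at this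
  rw [swap_comm f c] at e1
  have sqI := S.sq _ I4
  have sqL := S.sq _ L4
  have sq1 := S.swap_sq c f
  have sq2 := S.swap_sq d e
  generalize S.B {a, b, c, d} = I at *
  generalize S.B {a, b, e, f} = I' at *
  generalize S.B {a, b, c, e} = L at *
  generalize S.B {a, b, d, f} = Q at *
  generalize S.s (swap c f) = u at *
  generalize S.s (swap d e) = t at *
  have f1 : I' = L * u * L := by rw [← e1, mul_assoc, sqL, mul_one]
  have f2 : I * L * I = t := by rw [e3, mul_assoc, e5, ← mul_assoc, sqL, one_mul]
  have f3 : I * u * I = Q := by rw [mul_assoc, e4, ← mul_assoc, e2, mul_assoc, sq1, mul_one]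
  have f4 : t * Q * t = I' := by rw [e6, mul_assoc, sq2, mul_one]
  have f5 : I * I' * I = I' := by
    calc I * I' * I = I * L * (I * I) * u * (I * I) * L * I := by rw [sqI, f1]; group
      _ = (I * L * I) * (I * u * I) * (I * L * I) := by group
      _ = I' := by rw [f2, f3, f4]
  calc I * I' = I * I' * (I * I) := by rw [sqI, mul_one]
    _ = I * I' * I * I := by group
    _ = I' * I := by rw [f5]

theorem B_comm {I K : Finset α} (hI : I.card = 4) (hK : K.card = 4) (h : (I ∩ K).card = 2) :
    S.B I * S.B K = S.B K * S.B I := by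
  have h1 := Finset.card_sdiff_add_card_inter I K
  have h2 := Finset.card_sdiff_add_card_inter K I
  rw [Finset.inter_comm K I] at h2
  obtain ⟨a, b, hab, hP⟩ := Finset.card_eq_two.1 h
  obtain ⟨c, d, hcd, hQ⟩ := Finset.card_eq_two.1 (show (I \ K).card = 2 by omega)
  obtain ⟨e, f, hef, hR⟩ := Finset.card_eq_two.1 (show (K \ I).card = 2 by omega)
  have eP : ∀ x, (x ∈ I ∧ x ∈ K) ↔ (x = a ∨ x = b) := fun x => by
    simpa using Finset.ext_iff.1 hP x
  have eQ : ∀ x, (x ∈ I ∧ x ∉ K) ↔ (x = c ∨ x = d) := fun x => by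
    simpa using Finset.ext_iff.1 hQ x
  have eR : ∀ x, (x ∈ K ∧ x ∉ I) ↔ (x = e ∨ x = f) := fun x => by
    simpa using Finset.ext_iff.1 hR x
  have hIe : I = {a, b, c, d} := by
    ext x; have := eP x; have := eQ x; simp only [Finset.mem_insert, Finset.mem_singleton]; tauto
  have hKe : K = {a, b, e, f} := by
    ext x; have := eP x; have := eR x; simp only [Finset.mem_insert, Finset.mem_singleton]; tauto
  have ha := (eP a).2 (Or.inl rfl)
  have hb := (eP b).2 (Or.inr rfl)
  have hc := (eQ c).2 (Or.inl rfl)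
  have hd := (eQ d).2 (Or.inr rfl)
  have he := (eR e).2 (Or.inl rfl)
  have hf := (eR f).2 (Or.inr rfl)
  have ne : ∀ {x y : α} {L : Finset α}, x ∈ L → y ∉ L → x ≠ y := fun hx hy hxy =>
    hy (hxy ▸ hx)
  have hnd : [a, b, c, d, e, f].Nodup := by
    simp only [List.nodup_cons, List.mem_cons, List.not_mem_nil, not_or, or_false, not_false_iff,
      List.nodup_nil, and_true]
    exact ⟨⟨hab, ne ha.2 hc.2, ne ha.2 hd.2, ne ha.1 he.2, ne ha.1 hf.2⟩,
      ⟨ne hb.2 hc.2, ne hb.2 hd.2, ne hb.1 he.2, ne hb.1 hf.2⟩,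
      ⟨hcd, ne hc.1 he.2, ne hc.1 hf.2⟩, ⟨ne hd.1 he.2, ne hd.1 hf.2⟩, hef⟩
  rw [hIe, hKe]
  exact S.comm_of_distinct hnd

/-- A family of points of an `M`-set, indexed by the triples of seven letters, that permutations
permute in the natural way and each transvection fixes at the triples meeting its `4`-set in two
letters. -/
def Lab (S : TSys (Fin 7) M) {X : Type*} [MulAction M X] (q : Finset (Fin 7) → X) : Prop :=
  (∀ σ T, T.card = 3 → S.s σ • q T = q (T.map σ.toEmbedding)) ∧
  (∀ K T, K.card = 4 → T.card = 3 → (K ∩ T).card = 2 → S.B K • q T = q T)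

variable {S : TSys (Fin 7) M} {X : Type*} [MulAction M X] {q : Finset (Fin 7) → X}

/-- The transvections along the complements of the triples move one such family to another. -/
theorem Lab.compl (hq : S.Lab q) : S.Lab fun T => S.B Tᶜ • q T := by
  have hcard : ∀ T : Finset (Fin 7), T.card = 3 → Tᶜ.card = 4 := fun T hT => by
    rw [Finset.card_compl, hT]; rfl
  refine ⟨fun σ T hT => ?_, fun K T hK hT h => ?_⟩
  · have : (T.map σ.toEmbedding)ᶜ = Tᶜ.map σ.toEmbedding := by
      ext x; simp only [Finset.mem_compl, Finset.mem_map_equiv]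
    dsimp only
    rw [this, ← hq.1 σ T hT, ← mul_smul, ← mul_smul, S.conj σ _ (hcard T hT)]
  · have h' : (K ∩ Tᶜ).card = 2 := by
      have := Finset.card_sdiff_add_card_inter K T
      rw [← Finset.sdiff_eq_inter_compl]; omega
    dsimp only
    rw [← mul_smul, S.B_comm hK (hcard T hT) h', mul_smul, hq.2 K T hK hT h]

/-- One step along the orbit of `s σ * B {0, 1, 2, 3}`, where the transvection fixes the point. -/
theorem Lab.single (hq : S.Lab q) (σ : Perm (Fin 7)) {T T' : Finset (Fin 7)} (hT : T.card = 3)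
    (h2 : ({0, 1, 2, 3} ∩ T).card = 2) (hTm : T.map σ.toEmbedding = T') :
    (S.s σ * S.B {0, 1, 2, 3}) • q T = q T' := by
  rw [mul_smul, hq.2 _ T rfl hT h2, hq.1 σ T hT, hTm]

/-- Two steps along the orbit of `s σ * B {0, 1, 2, 3}`. The `braid` relation gives
`B I * s σ * B I = s (swap x y) * B I * s σ` for `I = {0, 1, 2, 3}`. -/
theorem Lab.double (hq : S.Lab q) (σ : Perm (Fin 7)) {T T' U : Finset (Fin 7)} {x y : Fin 7}
    (hT : T.card = 3) (hU : U.card = 3) (hx : x ∉ U) (hy : y ∉ U) (hxy : x ≠ y)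
    (hσ : ({0, 1, 2, 3} : Finset (Fin 7)).map σ.toEmbedding = insert x U)
    (hI : ({0, 1, 2, 3} : Finset (Fin 7)) = insert y U)
    (h2 : ({0, 1, 2, 3} ∩ T.map σ.toEmbedding).card = 2)
    (hTm : ((T.map σ.toEmbedding).map (swap x y).toEmbedding).map σ.toEmbedding = T') :
    (S.s σ * S.B {0, 1, 2, 3}) ^ 2 • q T = q T' := by
  have hb := S.braid U x y hU hx hy hxy
  rw [← hI] at hb
  have hT1 : (T.map σ.toEmbedding).card = 3 := by simpa using hT
  have e : S.B {0, 1, 2, 3} * (S.s σ * S.B {0, 1, 2, 3}) =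
      S.s (swap x y) * S.B {0, 1, 2, 3} * S.s σ := by
    have h1 : S.B (insert x U) = S.B {0, 1, 2, 3} * S.s (swap x y) * S.B {0, 1, 2, 3} := by
      rw [← hb, mul_assoc, S.sq _ rfl, mul_one]
    rw [S.conj σ _ rfl, hσ, h1]
    simp only [← mul_assoc]
    rw [S.sq _ rfl, one_mul]
  rw [pow_two, mul_assoc, e, mul_smul, mul_smul, mul_smul, hq.1 _ _ hT, hq.2 _ _ rfl hT1 h2,
    hq.1 _ _ hT1, hq.1 _ _ (by simpa using hT1), hTm]

/-- The `7`-cycle `a₁a₂a₃a₄a₅a₆`, on letters counted from `0`. -/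
def cyc7 : Perm (Fin 7) := swap 0 1 * swap 1 2 * swap 2 3 * swap 3 4 * swap 4 5 * swap 5 6

/-- The `6`-cycle `a₂a₃a₄a₅a₆`, on letters counted from `0`. -/
def cyc6 : Perm (Fin 7) := swap 1 2 * swap 2 3 * swap 3 4 * swap 4 5 * swap 5 6

theorem Lab.path7 (hq : S.Lab q) :
    (S.s cyc7 * S.B {0, 1, 2, 3}) ^ 8 • q {5, 6, 0} = q {4, 5, 6} := by
  have e1 : (S.s cyc7 * S.B {0, 1, 2, 3}) ^ 2 • q {5, 6, 0} = q {2, 5, 0} :=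
    hq.double cyc7 (U := {1, 2, 3}) (x := 4) (y := 0) (by decide) (by decide) (by decide)
      (by decide) (by decide) (by decide) (by decide) (by decide) (by decide)
  have e2 : (S.s cyc7 * S.B {0, 1, 2, 3}) • q {2, 5, 0} = q {3, 6, 1} :=
    hq.single cyc7 (by decide) (by decide) (by decide)
  have e3 : (S.s cyc7 * S.B {0, 1, 2, 3}) • q {3, 6, 1} = q {4, 0, 2} :=
    hq.single cyc7 (by decide) (by decide) (by decide)
  have e4 : (S.s cyc7 * S.B {0, 1, 2, 3}) • q {4, 0, 2} = q {5, 1, 3} :=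
    hq.single cyc7 (by decide) (by decide) (by decide)
  have e5 : (S.s cyc7 * S.B {0, 1, 2, 3}) • q {5, 1, 3} = q {6, 2, 4} :=
    hq.single cyc7 (by decide) (by decide) (by decide)
  have e6 : (S.s cyc7 * S.B {0, 1, 2, 3}) ^ 2 • q {6, 2, 4} = q {4, 5, 6} :=
    hq.double cyc7 (U := {1, 2, 3}) (x := 4) (y := 0) (by decide) (by decide) (by decide)
      (by decide) (by decide) (by decide) (by decide) (by decide) (by decide)
  generalize S.s cyc7 * S.B {0, 1, 2, 3} = m at *
  have : m ^ 8 = m ^ 2 * (m * (m * (m * (m * m ^ 2)))) := by group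
  rw [this]
  simp only [mul_smul]
  rw [e1, e2, e3, e4, e5, e6]

theorem Lab.path6 (hq : S.Lab q) :
    (S.s cyc6 * S.B {0, 1, 2, 3}) ^ 5 • q {5, 6, 1} = q {4, 5, 6} := by
  have e1 : (S.s cyc6 * S.B {0, 1, 2, 3}) ^ 2 • q {5, 6, 1} = q {3, 5, 1} :=
    hq.double cyc6 (U := {0, 2, 3}) (x := 4) (y := 1) (by decide) (by decide) (by decide)
      (by decide) (by decide) (by decide) (by decide) (by decide) (by decide)
  have e2 : (S.s cyc6 * S.B {0, 1, 2, 3}) • q {3, 5, 1} = q {4, 6, 2} :=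
    hq.single cyc6 (by decide) (by decide) (by decide)
  have e3 : (S.s cyc6 * S.B {0, 1, 2, 3}) ^ 2 • q {4, 6, 2} = q {4, 5, 6} :=
    hq.double cyc6 (U := {0, 2, 3}) (x := 4) (y := 1) (by decide) (by decide) (by decide)
      (by decide) (by decide) (by decide) (by decide) (by decide) (by decide)
  generalize S.s cyc6 * S.B {0, 1, 2, 3} = m at *
  have : m ^ 5 = m ^ 2 * (m * m ^ 2) := by group
  rw [this]
  simp only [mul_smul]
  rw [e1, e2, e3]

/-- The `9`th power in relator (6) sends `q {4, 5, 6}` to `B {0, 1, 2, 3} • q {4, 5, 6}`, and the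
`12`th power fixes it. The orbits pass from the family `q` to the family of `Lab.compl`, in
the case of the `12`th power also back. -/
theorem Lab.fixed (hq : S.Lab q)
    (h6 : (S.s cyc6 * S.B {0, 1, 2, 3}) ^ 12 = (S.s cyc7 * S.B {0, 1, 2, 3}) ^ 9) :
    S.B {0, 1, 2, 3} • q {4, 5, 6} = q {4, 5, 6} := by
  have hn := hq.compl
  have hI : ({4, 5, 6} : Finset (Fin 7))ᶜ = {0, 1, 2, 3} := by decide
  -- the images of the base point under both sides of the relation
  have h9 : (S.s cyc7 * S.B {0, 1, 2, 3}) ^ 9 • q {4, 5, 6} = S.B {0, 1, 2, 3} • q {4, 5, 6} := by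
    have e1 := hn.1 cyc7 {4, 5, 6} rfl
    have e2 := hn.path7
    dsimp only at e1 e2
    rw [show ({4, 5, 6} : Finset (Fin 7)).map cyc7.toEmbedding = {5, 6, 0} by decide, hI,
      ← mul_smul] at e1
    rw [hI, ← e1, ← mul_smul, ← pow_succ] at e2
    exact e2
  have h12 : (S.s cyc6 * S.B {0, 1, 2, 3}) ^ 12 • q {4, 5, 6} = q {4, 5, 6} := by
    have e1 := hn.1 cyc6 {4, 5, 6} rfl
    have e2 := hn.path6
    have e3 := hq.1 cyc6 {4, 5, 6} rfl
    have e4 := hq.path6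
    dsimp only at e1 e2
    rw [show ({4, 5, 6} : Finset (Fin 7)).map cyc6.toEmbedding = {5, 6, 1} by decide] at e1 e3
    rw [hI, ← mul_smul] at e1
    rw [hI, ← e1, ← mul_smul, ← pow_succ] at e2
    have e5 : S.s cyc6 • q {4, 5, 6} =
        (S.s cyc6 * S.B {0, 1, 2, 3}) • S.B {0, 1, 2, 3} • q {4, 5, 6} := by
      rw [mul_smul, ← mul_smul (S.B _), S.sq _ rfl, one_smul]
    rw [← e3, e5, ← mul_smul, ← pow_succ, ← e2, ← mul_smul, ← pow_add] at e4
    exact e4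
  rw [← h9, ← h6, h12]

/-- The case of seven letters of `Seven`, from `Lab.fixed` applied to the cosets of the subgroup in
question. -/
theorem mem_seven (S : TSys (Fin 7) M)
    (h6 : (S.s cyc6 * S.B {0, 1, 2, 3}) ^ 12 = (S.s cyc7 * S.B {0, 1, 2, 3}) ^ 9) :
    S.B {0, 1, 2, 3} ∈ Subgroup.closure
      ({m | ∃ σ : Perm (Fin 7), ({0, 1, 2, 3} : Finset (Fin 7)).map σ.toEmbedding = {0, 1, 2, 3} ∧
          ({4, 5, 6} : Finset (Fin 7)).map σ.toEmbedding = {4, 5, 6} ∧ m = S.s σ} ∪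
       {m | ∃ K : Finset (Fin 7), K.card = 4 ∧ (K ∩ {4, 5, 6}).card = 2 ∧ m = S.B K}) := by
  classical
  set R := Subgroup.closure
      ({m | ∃ σ : Perm (Fin 7), ({0, 1, 2, 3} : Finset (Fin 7)).map σ.toEmbedding = {0, 1, 2, 3} ∧
          ({4, 5, 6} : Finset (Fin 7)).map σ.toEmbedding = {4, 5, 6} ∧ m = S.s σ} ∪
       {m | ∃ K : Finset (Fin 7), K.card = 4 ∧ (K ∩ {4, 5, 6}).card = 2 ∧ m = S.B K}) with hR
  let q : Finset (Fin 7) → M ⧸ R := fun T =>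
    if h : ∃ σ : Perm (Fin 7), ({4, 5, 6} : Finset (Fin 7)).map σ.toEmbedding = T
    then ((S.s h.choose : M) : M ⧸ R) else ((1 : M) : M ⧸ R)
  have hqσ : ∀ σ : Perm (Fin 7),
      q (({4, 5, 6} : Finset (Fin 7)).map σ.toEmbedding) = (S.s σ : M) := by
    intro σ
    have h : ∃ τ : Perm (Fin 7), ({4, 5, 6} : Finset (Fin 7)).map τ.toEmbedding =
      ({4, 5, 6} : Finset (Fin 7)).map σ.toEmbedding := ⟨σ, rfl⟩
    simp only [q]
    rw [dif_pos h]
    refine mk_mem ?_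
    rw [← map_inv, ← map_mul]
    have hw : ({4, 5, 6} : Finset (Fin 7)).map ((h.choose)⁻¹ * σ).toEmbedding = {4, 5, 6} := by
      have key : ∀ τ : Perm (Fin 7), ({4, 5, 6} : Finset (Fin 7)).map τ.toEmbedding =
          ({4, 5, 6} : Finset (Fin 7)).map σ.toEmbedding →
          ({4, 5, 6} : Finset (Fin 7)).map (τ⁻¹ * σ).toEmbedding = {4, 5, 6} := by
        intro τ hτ
        rw [← map_perm_mul, ← hτ, map_perm_mul, inv_mul_cancel]; rfl
      exact key _ h.choose_spec
    refine Subgroup.subset_closure (Or.inl ⟨_, ?_, hw, rfl⟩)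
    rw [show ({0, 1, 2, 3} : Finset (Fin 7)) = ({4, 5, 6})ᶜ by decide]
    ext x
    have := Finset.ext_iff.1 hw x
    rw [Finset.mem_map_equiv] at this
    rw [Finset.mem_map_equiv, Finset.mem_compl, Finset.mem_compl, this]
  have hex : ∀ T : Finset (Fin 7), T.card = 3 →
      ∃ σ : Perm (Fin 7), ({4, 5, 6} : Finset (Fin 7)).map σ.toEmbedding = T := by
    intro T hT
    let e : {x // x ∈ ({4, 5, 6} : Finset (Fin 7))} ≃ {x // x ∈ T} :=
      Finset.equivOfCardEq (by rw [hT]; rfl)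
    refine ⟨e.extendSubtype, Finset.eq_of_subset_of_card_le ?_ (by simp [hT])⟩
    intro x hx
    obtain ⟨y, hy, rfl⟩ := Finset.mem_map.1 hx
    exact e.extendSubtype_mem y hy
  have hq : S.Lab q := by
    refine ⟨fun σ T hT => ?_, fun K T hK hT h => ?_⟩
    · obtain ⟨τ, rfl⟩ := hex T hT
      rw [map_perm_mul, hqσ, hqσ, map_mul]; rfl
    · obtain ⟨τ, rfl⟩ := hex T hT
      rw [hqσ]
      refine smul_mk_eq ?_
      have hcon := S.conj τ (K.map (τ⁻¹).toEmbedding) (by simpa using hK)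
      have e1 : K.map (1 : Perm (Fin 7)).toEmbedding = K := by
        ext a; rw [Finset.mem_map_equiv]; rfl
      rw [map_perm_mul, mul_inv_cancel, e1] at hcon
      rw [← hcon, mul_inv_rev, mul_assoc, inv_mul_cancel, mul_one]
      refine inv_mem (Subgroup.subset_closure (Or.inr ⟨_, by simpa using hK, ?_, rfl⟩))
      rw [← h, ← Finset.card_map τ.toEmbedding, map_perm_inter, map_perm_mul, mul_inv_cancel, e1]
  have hq1 : q {4, 5, 6} = ((1 : M) : M ⧸ R) := by
    have := hqσ 1
    rwa [map_one, show ({4, 5, 6} : Finset (Fin 7)).map (1 : Perm (Fin 7)).toEmbedding = {4, 5, 6}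
      from rfl] at this
  have := hq.fixed h6
  rw [hq1] at this
  have h' := QuotientGroup.eq.1 this
  simpa using inv_mem h'

end TSys

/-! ### Restriction to seven letters -/

namespace TSys

variable {α M : Type*} [DecidableEq α] [Group M]

theorem viaEmbedding_swap {β : Type*} [DecidableEq β] (ι : β ↪ α) (x y : β) :
    Perm.viaEmbeddingHom ι (swap x y) = swap (ι x) (ι y) := by
  ext z
  rw [Perm.viaEmbeddingHom_apply]
  by_cases hz : z ∈ Set.range ι
  · obtain ⟨w, rfl⟩ := hz
    rw [Perm.viaEmbedding_apply, ι.injective.swap_apply]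
  · rw [Perm.viaEmbedding_apply_of_notMem _ _ _ hz, swap_apply_of_ne_of_ne]
    · rintro rfl; exact hz ⟨x, rfl⟩
    · rintro rfl; exact hz ⟨y, rfl⟩

theorem map_viaEmbedding {α β : Type*} (ι : β ↪ α) (σ : Perm β) (I : Finset β) :
    (I.map ι).map (Perm.viaEmbeddingHom ι σ).toEmbedding = (I.map σ.toEmbedding).map ι := by
  rw [Finset.map_map, Finset.map_map]
  congr 1
  ext x
  simp [Perm.viaEmbeddingHom_apply, Perm.viaEmbedding_apply]

/-- Restriction of a system to the points in the image of an embedding. -/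
noncomputable def comap {β : Type*} [DecidableEq β] (S : TSys α M) (ι : β ↪ α) : TSys β M where
  s := S.s.comp (Perm.viaEmbeddingHom ι)
  B I := S.B (I.map ι)
  conj σ I h := by
    have := S.conj (Perm.viaEmbeddingHom ι σ) (I.map ι) (by simpa using h)
    rwa [map_viaEmbedding] at this
  sq I h := S.sq _ (by simpa using h)
  braid T x y h hx hy hxy := by
    rw [Finset.map_insert, Finset.map_insert, MonoidHom.comp_apply, viaEmbedding_swap]
    exact S.braid _ _ _ (by simpa using h) (by simpa using hx) (by simpa using hy)
      (by simpa using hxy)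

theorem exists_perm_map_pair [Finite α] {I I' w w' : Finset α} (hI : I.card = I'.card)
    (hw : w.card = w'.card) (hd : Disjoint I w) (hd' : Disjoint I' w') :
    ∃ σ : Perm α, I.map σ.toEmbedding = I' ∧ w.map σ.toEmbedding = w' := by
  classical
  let e1 : I ≃ I' := Finset.equivOfCardEq hI
  let e2 : w ≃ w' := Finset.equivOfCardEq hw
  let e : {x // x ∈ I ∪ w} ≃ {x // x ∈ I' ∪ w'} :=
    (Equiv.Finset.union I w hd).symm.trans
      ((Equiv.sumCongr e1 e2).trans (Equiv.Finset.union I' w' hd'))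
  refine ⟨e.extendSubtype, Finset.eq_of_subset_of_card_le ?_ (by simp [hI]),
    Finset.eq_of_subset_of_card_le ?_ (by simp [hw])⟩
  · intro y hy
    obtain ⟨x, hx, rfl⟩ := Finset.mem_map.1 hy
    have h : (⟨x, Finset.mem_union_left _ hx⟩ : {x // x ∈ I ∪ w}) =
      Equiv.Finset.union I w hd (Sum.inl ⟨x, hx⟩) := by simp
    change e.extendSubtype x ∈ I'
    rw [e.extendSubtype_apply_of_mem x (Finset.mem_union_left _ hx), h]
    simp only [e, Equiv.trans_apply, Equiv.symm_apply_apply, Equiv.sumCongr_apply, Sum.map_inl]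
    simp
  · intro y hy
    obtain ⟨x, hx, rfl⟩ := Finset.mem_map.1 hy
    have h : (⟨x, Finset.mem_union_right _ hx⟩ : {x // x ∈ I ∪ w}) =
      Equiv.Finset.union I w hd (Sum.inr ⟨x, hx⟩) := by simp
    change e.extendSubtype x ∈ w'
    rw [e.extendSubtype_apply_of_mem x (Finset.mem_union_right _ hx), h]
    simp only [e, Equiv.trans_apply, Equiv.symm_apply_apply, Equiv.sumCongr_apply, Sum.map_inr]
    simp

theorem seven_of_embedding [Finite α] (S : TSys α M) (ι : Fin 7 ↪ α)
    (h6 : ((S.comap ι).s cyc6 * (S.comap ι).B {0, 1, 2, 3}) ^ 12 =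
      ((S.comap ι).s cyc7 * (S.comap ι).B {0, 1, 2, 3}) ^ 9) : S.Seven := by
  intro I w h4 h3 hd
  have hd0 : Disjoint ({0, 1, 2, 3} : Finset (Fin 7)) {4, 5, 6} := by decide
  obtain ⟨τ, hτI, hτw⟩ := exists_perm_map_pair (I := ({0, 1, 2, 3} : Finset (Fin 7)).map ι)
    (w := ({4, 5, 6} : Finset (Fin 7)).map ι) (I' := I) (w' := w)
    (by rw [h4, Finset.card_map]; rfl) (by rw [h3, Finset.card_map]; rfl)
    (by simpa only [Finset.disjoint_map] using hd0) hd
  have hmem := (S.comap ι).mem_seven h6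
  have huniv : ({0, 1, 2, 3} : Finset (Fin 7)) ∪ {4, 5, 6} = Finset.univ := by decide
  have hunion : I ∪ w = (Finset.univ.map ι).map τ.toEmbedding := by
    rw [← huniv, Finset.map_union, Finset.map_union, hτI, hτw]
  set R := Subgroup.closure
    ({m | ∃ σ : Perm α, I.map σ.toEmbedding = I ∧ w.map σ.toEmbedding = w ∧
        (∀ x ∉ I ∪ w, σ x = x) ∧ m = S.s σ} ∪
     {m | ∃ K : Finset α, K.card = 4 ∧ K ⊆ I ∪ w ∧ (K ∩ w).card = 2 ∧ m = S.B K})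
  have hcB : ∀ K : Finset α, K.card = 4 →
      S.s τ * S.B K * (S.s τ)⁻¹ = S.B (K.map τ.toEmbedding) := fun K hK => by
    rw [S.conj τ K hK, mul_assoc, mul_inv_cancel, mul_one]
  have key := (Subgroup.closure_le (R.comap (MulAut.conj (S.s τ)).toMonoidHom)).2 ?_ hmem
  · have h : S.s τ * S.B (({0, 1, 2, 3} : Finset (Fin 7)).map ι) * (S.s τ)⁻¹ ∈ R := key
    rwa [hcB _ (by rw [Finset.card_map]; rfl), hτI] at h
  · rintro _ (⟨σ, hσI, hσw, rfl⟩ | ⟨K, hK, hKw, rfl⟩)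
    · change S.s τ * S.s (Perm.viaEmbeddingHom ι σ) * (S.s τ)⁻¹ ∈ R
      rw [← map_inv, ← map_mul, ← map_mul]
      have hm : ∀ U : Finset (Fin 7), U.map σ.toEmbedding = U →
          ((U.map ι).map τ.toEmbedding).map
            (τ * Perm.viaEmbeddingHom ι σ * τ⁻¹).toEmbedding = (U.map ι).map τ.toEmbedding := by
        intro U hU
        rw [map_perm_mul, inv_mul_cancel_right, ← map_perm_mul, map_viaEmbedding, hU]
      refine Subgroup.subset_closure (Or.inl ⟨_, ?_, ?_, fun x hx => ?_, rfl⟩)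
      · rw [← hτI]; exact hm _ hσI
      · rw [← hτw]; exact hm _ hσw
      · rw [Perm.mul_apply, Perm.mul_apply, Perm.viaEmbeddingHom_apply,
          Perm.viaEmbedding_apply_of_notMem]
        · exact τ.apply_symm_apply x
        rintro ⟨y, hy⟩
        refine hx ?_
        rw [hunion, Finset.mem_map_equiv]
        change τ⁻¹ x ∈ _
        rw [← hy]
        simp
    · change S.s τ * S.B (K.map ι) * (S.s τ)⁻¹ ∈ R
      rw [hcB _ (by simpa using hK)]
      refine Subgroup.subset_closure (Or.inr ⟨_, by simpa using hK, ?_, ?_, rfl⟩)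
      · rw [hunion]
        simp only [Finset.map_subset_map]
        exact Finset.subset_univ _
      · rw [← hτw, ← map_perm_inter, Finset.card_map, ← hKw, ← Finset.card_map ι, Finset.map_inter]

theorem seven_of_card_lt [Fintype α] (S : TSys α M) (h : Fintype.card α < 7) : S.Seven := by
  intro I w h4 h3 hd
  have := Finset.card_le_univ (I ∪ w)
  rw [Finset.card_union_of_disjoint hd] at this
  omega

end TSys

/-! ### The system of transvections defined by an involution -/

/-- Permutations preserving a predicate `p` are generated by the transpositions of letters at which
`p` has the same truth value. -/
theorem perm_induction_of_iff {α : Type*} [DecidableEq α] [Fintype α] (p : α → Prop)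
    {Q : Perm α → Prop} (h1 : Q 1) (hmul : ∀ x y, (p x ↔ p y) → ∀ τ, Q τ → Q (swap x y * τ)) :
    ∀ τ : Perm α, (∀ x, p (τ x) ↔ p x) → Q τ := by
  suffices ∀ n, ∀ τ : Perm α, τ.support.card = n → (∀ x, p (τ x) ↔ p x) → Q τ from
    fun τ hτ => this _ τ rfl hτ
  intro n
  induction n using Nat.strong_induction_on with
  | _ n ih =>
    intro τ hn hτ
    by_cases hne : τ = 1
    · rw [hne]; exact h1
    obtain ⟨x, hx⟩ : ∃ x, τ x ≠ x := by
      by_contra! h; exact hne (Perm.ext h)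
    have hlt := Perm.card_support_swap_mul hx
    have hQ := ih _ (hn ▸ hlt) (swap x (τ x) * τ) rfl fun y => by
      rw [Perm.mul_apply, swap_apply_def]
      split_ifs with h h'
      · rw [hτ x, ← hτ y, h]
      · rw [← hτ x, ← h', hτ y]
      · exact hτ y
    have := hmul x (τ x) (hτ x).symm _ hQ
    rwa [← mul_assoc, swap_mul_self, one_mul] at this

/-- The first four letters. -/
def base (g : ℕ) : Finset (Fin g) := Finset.univ.filter fun x => (x : ℕ) < 4

theorem mem_base {g : ℕ} {x : Fin g} : x ∈ base g ↔ (x : ℕ) < 4 := by simp [base]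

theorem map_base {n g : ℕ} (hn : 4 ≤ n) (h : n ≤ g) : (base n).map (Fin.castLEEmb h) = base g := by
  ext x
  simp only [Finset.mem_map, mem_base]
  constructor
  · rintro ⟨y, hy, rfl⟩; simpa using hy
  · intro hx; exact ⟨⟨x, by omega⟩, hx, by ext; simp⟩

theorem card_base {g : ℕ} (hg : 4 ≤ g) : (base g).card = 4 := by
  rw [← map_base le_rfl hg, Finset.card_map]; rfl

/-- An element commuting with all adjacent transpositions other than `(3 4)` commutes with the
whole stabilizer of the first four letters. -/
theorem commute_of_map_base {M : Type*} [Group M] {g : ℕ} (s : Perm (Fin g) →* M) (b : M)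
    (hcomm : ∀ i (h : i + 1 < g), i ≠ 3 → Commute (s (swap ⟨i, by omega⟩ ⟨i + 1, h⟩)) b) :
    ∀ τ : Perm (Fin g), (base g).map τ.toEmbedding = base g → Commute (s τ) b := by
  have key : ∀ n x y, y = x + n + 1 → ((x < 4 ↔ y < 4)) → ∀ (hx : x < g) (hy : y < g),
      Commute (s (swap ⟨x, hx⟩ ⟨y, hy⟩)) b := by
    intro n
    induction n with
    | zero =>
      rintro x y rfl hxy hx hy
      exact hcomm x hy (by omega)
    | succ n ih =>
      rintro x y rfl hxy hx hy
      have h1 := ih x (x + n + 1) rfl (by omega) hx (by omega)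
      have h2 := hcomm (x + n + 1) (by omega) (by omega)
      have e : swap (⟨x, hx⟩ : Fin g) ⟨x + (n + 1) + 1, hy⟩ =
          swap ⟨x + n + 1, by omega⟩ ⟨x + n + 1 + 1, by omega⟩ * swap ⟨x, hx⟩ ⟨x + n + 1, by omega⟩ *
          swap ⟨x + n + 1, by omega⟩ ⟨x + n + 1 + 1, by omega⟩ := by
        rw [swap_mul_swap_mul_swap, swap_comm]
        · rfl
        · simp only [ne_eq, Fin.ext_iff]; omega
        · simp only [ne_eq, Fin.ext_iff]; omega
      rw [e, map_mul, map_mul]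
      exact (h2.mul_left h1).mul_left h2
  have hswap : ∀ x y : Fin g, ((x : ℕ) < 4 ↔ (y : ℕ) < 4) → Commute (s (swap x y)) b := by
    intro x y hxy
    rcases lt_trichotomy (x : ℕ) y with h | h | h
    · exact key (y - x - 1) x y (by omega) hxy _ _
    · rw [Fin.ext h, swap_self, ← Perm.one_def, map_one]; exact Commute.one_left b
    · rw [swap_comm]; exact key (x - y - 1) y x (by omega) hxy.symm _ _
  intro τ hτ
  refine perm_induction_of_iff (fun x : Fin g => (x : ℕ) < 4) (Q := fun τ => Commute (s τ) b)
    (by rw [map_one]; exact Commute.one_left b) (fun x y hxy τ h => ?_) τ fun x => ?_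
  · rw [map_mul]; exact (hswap x y hxy).mul_left h
  · rw [← mem_base, ← mem_base]
    conv_lhs => rw [← hτ]
    rw [Finset.mem_map_equiv, symm_apply_apply]

/-- An involution `b` satisfying relations (4) and (5) gives rise to a system of transvections: `B I`
is the conjugate of `b` by any permutation carrying the first four letters to `I`. -/
theorem exists_tsys {M : Type*} [Group M] {g : ℕ} (hg : 4 ≤ g) (s : Perm (Fin g) →* M) (b : M)
    (hb : b * b = 1)
    (hcomm : ∀ i (h : i + 1 < g), i ≠ 3 → Commute (s (swap ⟨i, by omega⟩ ⟨i + 1, h⟩)) b)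
    (h5 : ∀ h : 4 < g, (s (swap ⟨3, by omega⟩ ⟨4, h⟩) * b) ^ 3 = 1) :
    ∃ S : TSys (Fin g) M, S.s = s ∧ S.B (base g) = b := by
  classical
  have hc := commute_of_map_base s b hcomm
  let B : Finset (Fin g) → M := fun I =>
    if h : ∃ σ : Perm (Fin g), (base g).map σ.toEmbedding = I
    then s h.choose * b * (s h.choose)⁻¹ else 1
  have hBσ : ∀ σ : Perm (Fin g), B ((base g).map σ.toEmbedding) = s σ * b * (s σ)⁻¹ := by
    intro σ
    have h : ∃ τ : Perm (Fin g), (base g).map τ.toEmbedding = (base g).map σ.toEmbedding :=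
      ⟨σ, rfl⟩
    simp only [B]
    rw [dif_pos h]
    have key : ∀ τ : Perm (Fin g), (base g).map τ.toEmbedding = (base g).map σ.toEmbedding →
        s τ * b * (s τ)⁻¹ = s σ * b * (s σ)⁻¹ := by
      intro τ hτ
      have := hc (σ⁻¹ * τ) (by
        rw [← map_perm_mul, hτ, map_perm_mul, inv_mul_cancel]
        ext a; rw [Finset.mem_map_equiv]; rfl)
      rw [map_mul, map_inv] at this
      have h' := this.eq
      rw [mul_inv_eq_iff_eq_mul]
      calc s τ * b = s σ * ((s σ)⁻¹ * s τ * b) := by group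
        _ = s σ * b * (s σ)⁻¹ * s τ := by rw [h']; group
    exact key _ h.choose_spec
  have hex : ∀ I : Finset (Fin g), I.card = 4 →
      ∃ σ : Perm (Fin g), (base g).map σ.toEmbedding = I := by
    intro I hI
    obtain ⟨σ, hσ, -⟩ := TSys.exists_perm_map_pair (I := base g) (I' := I) (w := ∅) (w' := ∅)
      (by rw [hI, card_base hg]) rfl (by simp) (by simp)
    exact ⟨σ, hσ⟩
  refine ⟨⟨s, B, fun σ I hI => ?_, fun I hI => ?_, fun T x y hT hx hy hxy => ?_⟩, rfl, ?_⟩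
  · obtain ⟨τ, rfl⟩ := hex I hI
    rw [map_perm_mul, hBσ, hBσ, map_mul]; group
  · obtain ⟨τ, rfl⟩ := hex I hI
    rw [hBσ]
    calc s τ * b * (s τ)⁻¹ * (s τ * b * (s τ)⁻¹) = s τ * (b * b) * (s τ)⁻¹ := by group
      _ = 1 := by rw [hb]; group
  · have h4 : 4 < g := by
      have := Finset.card_le_univ (insert x (insert y T))
      rw [Finset.card_insert_of_notMem (by simp [hx, hxy]), Finset.card_insert_of_notMem hy, hT,
        Fintype.card_fin] at this
      omega
    have ha4 := h5 h4
    set z3 : Fin g := ⟨3, by omega⟩ with hz3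
    set z4 : Fin g := ⟨4, h4⟩ with hz4
    -- a permutation carrying the first four letters to `insert x T`, with `3 ↦ x`, `4 ↦ y`
    obtain ⟨σ, hσI, hσ3, hσ4⟩ : ∃ σ : Perm (Fin g), (base g).map σ.toEmbedding = insert x T ∧
        σ z3 = x ∧ σ z4 = y := by
      obtain ⟨σ, hσ, hσ4⟩ := TSys.exists_perm_map_pair (I := base g) (I' := insert x T)
        (w := {z4}) (w' := {y}) (by rw [card_base hg, Finset.card_insert_of_notMem hx, hT])
        rfl (by simp [mem_base, hz4]) (by simp [hy, Ne.symm hxy])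
      rw [Finset.map_singleton, Finset.singleton_inj] at hσ4
      have hxm : x ∈ (base g).map σ.toEmbedding := by rw [hσ]; simp
      obtain ⟨z, hz, hzx⟩ := Finset.mem_map.1 hxm
      refine ⟨σ * swap z z3, ?_, ?_, ?_⟩
      · have h3 : z3 ∈ base g := by simp [mem_base, hz3]
        rw [← map_perm_mul, map_swap_of_iff (by simp [hz, h3]), hσ]
      · simpa using hzx
      · rw [Perm.mul_apply, swap_apply_of_ne_of_ne]
        · exact hσ4
        · rintro rfl; simp [mem_base, hz4] at hz
        · simp [hz3, hz4]
    have hsw : swap x y = σ * swap z3 z4 * σ⁻¹ := by rw [← hσ3, ← hσ4, swap_apply_apply]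
    have hy' : insert y T = (base g).map (σ * swap z3 z4).toEmbedding := by
      rw [← TSys.map_swap_insert hx hy, ← hσI, map_perm_mul, hsw, inv_mul_cancel_right]
    have hsq : s (swap z3 z4) * s (swap z3 z4) = 1 := by
      rw [← map_mul, swap_mul_self, map_one]
    rw [hy', ← hσI, hBσ, hBσ, hsw, map_mul, map_mul, map_mul, map_inv]
    generalize s (swap z3 z4) = a at *
    have hai : a⁻¹ = a := inv_eq_of_mul_eq_one_left hsq
    have hbi : b⁻¹ = b := inv_eq_of_mul_eq_one_left hb
    have h3 : b * a * b * a⁻¹ = a * b := by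
      have : a * b * a * b * a * b = 1 := by
        rw [← ha4]; simp only [pow_succ, pow_zero, one_mul, mul_assoc]
      rw [hai]
      calc b * a * b * a = a⁻¹ * (a * b * a * b * a * b) * b⁻¹ := by group
        _ = a * b := by rw [this, hai, hbi, mul_one]
    calc s σ * b * (s σ)⁻¹ * (s σ * a * b * (s σ * a)⁻¹)
        = s σ * (b * a * b * a⁻¹) * (s σ)⁻¹ := by group
      _ = s σ * a * b * (s σ * a)⁻¹ * (s σ * a * (s σ)⁻¹) := by rw [h3]; group
  · have := hBσ 1
    rw [map_one] at this
    have e1 : (base g).map (1 : Perm (Fin g)).toEmbedding = base g := by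
      ext a; rw [Finset.mem_map_equiv]; rfl
    rw [e1] at this
    simpa using this

/-! ### Permutations and transvections in the orthogonal group -/

section Orthogonal

open Matrix

variable {α : Type*} [DecidableEq α] [Fintype α]

/-- The indicator vector of a finite set, over `ℤ/2`. -/
def ind (v : Finset α) : α → ZMod 2 := fun x => if x ∈ v then 1 else 0

theorem zmod_two_cases (a : ZMod 2) : a = 0 ∨ a = 1 := by
  revert a; decide

theorem ind_dotProduct (u v : Finset α) : ind u ⬝ᵥ ind v = ((u ∩ v).card : ZMod 2) := by
  simp only [dotProduct, ind, ← ite_and, mul_ite, mul_one, mul_zero]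
  rw [Finset.sum_ite, Finset.sum_const_zero, add_zero, Finset.sum_const, nsmul_eq_mul, mul_one]
  congr 2
  ext x; simp [and_comm]

theorem ind_symmDiff {α : Type*} [DecidableEq α] (u v : Finset α) :
    ind (u ∆ v) = ind u + ind v := by
  ext x
  simp only [ind, Finset.mem_symmDiff, Pi.add_apply]
  by_cases h1 : x ∈ u <;> by_cases h2 : x ∈ v <;> simp [h1, h2]; decide

theorem ind_singleton {α : Type*} [DecidableEq α] (i : α) : ind {i} = Pi.single i 1 := by
  ext x; simp [ind, Pi.single_apply]

/-- Finite sets of letters correspond to vectors over `ℤ/2`. -/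
def indEquiv : Finset α ≃ (α → ZMod 2) where
  toFun := ind
  invFun x := Finset.univ.filter fun i => x i = 1
  left_inv v := by ext x; simp [ind]
  right_inv x := by
    ext i
    rcases zmod_two_cases (x i) with h | h <;> simp [ind, h]

/-- Permutation matrices, as a homomorphism to the orthogonal group. -/
def permO : Perm α →* orthogonalGroup α (ZMod 2) where
  toFun σ := ⟨(σ⁻¹).permMatrix (ZMod 2), by
    rw [mem_orthogonalGroup_iff, transpose_permMatrix, ← permMatrix_mul, inv_inv,
      mul_inv_cancel, permMatrix_one]⟩
  map_one' := by ext1; simp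
  map_mul' σ τ := by ext1; simp [permMatrix_mul]

theorem permO_mulVec (σ : Perm α) (x : α → ZMod 2) :
    (permO σ).1 *ᵥ x = fun i => x (σ.symm i) := permMatrix_mulVec σ⁻¹

theorem permO_ind (σ : Perm α) (v : Finset α) :
    (permO σ).1 *ᵥ ind v = ind (v.map σ.toEmbedding) := by
  rw [permO_mulVec]; ext i; simp only [ind, Finset.mem_map_equiv]

/-- The transvection `x ↦ x + (r · x) r` along the indicator vector `r` of `I`. -/
def transM (I : Finset α) : Matrix α α (ZMod 2) := 1 + vecMulVec (ind I) (ind I)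

theorem transM_mulVec (I : Finset α) (x : α → ZMod 2) :
    transM I *ᵥ x = x + (ind I ⬝ᵥ x) • ind I := by
  rw [transM, add_mulVec, one_mulVec, vecMulVec_mulVec]
  congr 1
  ext i; simp [mul_comm]

theorem ext_mulVec {A B : Matrix α α (ZMod 2)} (h : ∀ x, A *ᵥ x = B *ᵥ x) : A = B := by
  ext i j
  have := congrFun (h (Pi.single j 1)) i
  simpa using this

theorem ind_dotProduct_self {I : Finset α} (h : I.card = 4) : ind I ⬝ᵥ ind I = 0 := by
  rw [ind_dotProduct, Finset.inter_self, h]; rfl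

theorem transM_mul_self {I : Finset α} (h : I.card = 4) : transM I * transM I = 1 := by
  refine ext_mulVec fun x => ?_
  rw [← mulVec_mulVec, transM_mulVec, transM_mulVec, dotProduct_add, dotProduct_smul,
    ind_dotProduct_self h, smul_zero, add_zero, add_assoc, ← add_smul, one_mulVec,
    CharTwo.add_self_eq_zero, zero_smul, add_zero]

/-- The transvection along a `4`-set, as an orthogonal matrix. -/
def transO (I : Finset α) (h : I.card = 4) : orthogonalGroup α (ZMod 2) :=
  ⟨transM I, by
    rw [mem_orthogonalGroup_iff, transM, transpose_add, transpose_one, transpose_vecMulVec]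
    exact transM_mul_self h⟩

theorem permO_mul_transO (σ : Perm α) (I : Finset α) (h : I.card = 4) :
    permO σ * transO I h = transO (I.map σ.toEmbedding) (by simpa using h) * permO σ := by
  ext1
  refine ext_mulVec fun x => ?_
  change ((permO σ).1 * transM I) *ᵥ x = (transM (I.map σ.toEmbedding) * (permO σ).1) *ᵥ x
  rw [← mulVec_mulVec, ← mulVec_mulVec, transM_mulVec, transM_mulVec, mulVec_add, mulVec_smul,
    permO_ind]
  congr 2
  rw [permO_mulVec]
  simp only [dotProduct]
  rw [← Equiv.sum_comp σ fun i => ind (I.map σ.toEmbedding) i * x (σ.symm i)]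
  refine Finset.sum_congr rfl fun i _ => ?_
  simp [ind]

theorem transM_ind (I v : Finset α) :
    transM I *ᵥ ind v = ind (if (I ∩ v).card % 2 = 0 then v else v ∆ I) := by
  rw [transM_mulVec, ind_dotProduct]
  split_ifs with h
  · rw [(ZMod.natCast_eq_zero_iff _ 2).2 (Nat.dvd_of_mod_eq_zero h), zero_smul, add_zero]
  · have : ((I ∩ v).card : ZMod 2) = 1 := by
      rw [← Nat.mod_add_div (I ∩ v).card 2, show (I ∩ v).card % 2 = 1 by omega]
      push_cast
      rw [show (2 : ZMod 2) = 0 from rfl]; simp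
    rw [this, one_smul, ind_symmDiff]

/-- The action of the orthogonal group on finite sets of letters, viewed as vectors. -/
def actO : orthogonalGroup α (ZMod 2) →* Perm (Finset α) where
  toFun A := ⟨fun v => indEquiv.symm (A.1 *ᵥ ind v), fun v => indEquiv.symm ((A⁻¹).1 *ᵥ ind v),
    fun v => by
      change indEquiv.symm (_ *ᵥ indEquiv (indEquiv.symm _)) = v
      rw [apply_symm_apply, mulVec_mulVec, ← Submonoid.coe_mul, inv_mul_cancel]
      rw [Submonoid.coe_one, one_mulVec]; exact indEquiv.symm_apply_apply v,
    fun v => by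
      change indEquiv.symm (_ *ᵥ indEquiv (indEquiv.symm _)) = v
      rw [apply_symm_apply, mulVec_mulVec, ← Submonoid.coe_mul, mul_inv_cancel]
      rw [Submonoid.coe_one, one_mulVec]; exact indEquiv.symm_apply_apply v⟩
  map_one' := by
    ext1 v
    change indEquiv.symm (((1 : orthogonalGroup α (ZMod 2)) : Matrix α α (ZMod 2)) *ᵥ ind v) = v
    rw [Submonoid.coe_one, one_mulVec]; exact indEquiv.symm_apply_apply v
  map_mul' A C := by
    ext1 v
    change indEquiv.symm ((A * C).1 *ᵥ ind v) =
      indEquiv.symm (A.1 *ᵥ indEquiv (indEquiv.symm (C.1 *ᵥ ind v)))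
    rw [apply_symm_apply, mulVec_mulVec, Submonoid.coe_mul]

theorem actO_eq {A : orthogonalGroup α (ZMod 2)} {v u : Finset α} (h : A.1 *ᵥ ind v = ind u) :
    actO A v = u := by
  change indEquiv.symm (A.1 *ᵥ ind v) = u
  rw [h]; exact indEquiv.symm_apply_apply u

/-! ### Generation of the orthogonal group -/

theorem mulVec_dotProduct_mulVec (A : orthogonalGroup α (ZMod 2)) (x y : α → ZMod 2) :
    (A.1 *ᵥ x) ⬝ᵥ (A.1 *ᵥ y) = x ⬝ᵥ y := by
  rw [dotProduct_mulVec, ← mulVec_transpose, mulVec_mulVec,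
    (mem_orthogonalGroup_iff' _ _).1 A.2, one_mulVec]

theorem exists_ind (x : α → ZMod 2) : ∃ v, x = ind v :=
  ⟨indEquiv.symm x, (indEquiv.apply_symm_apply x).symm⟩

theorem ind_injective : Function.Injective (ind : Finset α → α → ZMod 2) :=
  indEquiv.injective

/-- The group generated by permutation matrices and transvections carries the basis vector of `p` to
every odd vector supported in `J`, except the indicator vector of `J` if `J` is not a singleton. -/
theorem exists_mem_carry (H : Subgroup (orthogonalGroup α (ZMod 2)))
    (hP : ∀ σ, permO σ ∈ H) (hT : ∀ I h, transO I h ∈ H) (J : Finset α) (p : α) (hp : p ∈ J)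
    (k : ℕ) : ∀ v ⊆ J, v.card = 2 * k + 1 → (v.card = 1 ∨ v ≠ J) →
    ∃ A ∈ H, (∀ i ∉ J, A.1 *ᵥ ind {i} = ind {i}) ∧ A.1 *ᵥ ind {p} = ind v := by
  induction k with
  | zero =>
    intro v hv hvc _
    obtain ⟨q, rfl⟩ := Finset.card_eq_one.1 hvc
    rw [Finset.singleton_subset_iff] at hv
    refine ⟨permO (swap p q), hP _, fun i hi => ?_, ?_⟩
    · rw [permO_ind, Finset.map_singleton]
      congr 2
      exact TSys.swap_fix hp hv i hi
    · rw [permO_ind, Finset.map_singleton]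
      simp
  | succ k ih =>
    intro v hv hvc hne
    have hne : v ≠ J := hne.resolve_left (by omega)
    obtain ⟨K, hK, hK4, hKv⟩ := TSys.exists_lowering (k := k) hv (by omega) hne
    obtain ⟨u1, u2, u3⟩ := TSys.lower (k := k) hv (by omega) hK hK4 hKv
    obtain ⟨A, hA, hfix, hAp⟩ := ih _ u1 u2 (Or.inr u3)
    refine ⟨transO K hK4 * A, mul_mem (hT K hK4) hA, fun i hi => ?_, ?_⟩
    · rw [Submonoid.coe_mul, ← mulVec_mulVec, hfix i hi]
      change transM K *ᵥ _ = _
      have : K ∩ {i} = ∅ := Finset.inter_singleton_of_notMem fun h => hi (hK h)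
      rw [transM_ind, this]
      rfl
    · rw [Submonoid.coe_mul, ← mulVec_mulVec, hAp]
      change transM K *ᵥ _ = _
      have := card_inter_symmDiff K v K
      rw [Finset.inter_self] at this
      rw [transM_ind, if_neg (by omega), symmDiff_symmDiff_cancel_right]

/-- Permutation matrices and transvections generate the orthogonal group. The induction removes the
letters of `J` one at a time: `A` sends the basis vector of `p` to an odd vector, which is not the
indicator vector of `J` (unless `J = {p}`), as `A` fixes the latter; an element of `H` does the
same to the basis vector of `p`. -/
theorem mem_of_generators (H : Subgroup (orthogonalGroup α (ZMod 2)))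
    (hP : ∀ σ, permO σ ∈ H) (hT : ∀ I h, transO I h ∈ H) (J : Finset α) :
    ∀ A : orthogonalGroup α (ZMod 2), (∀ i ∉ J, A.1 *ᵥ ind {i} = ind {i}) → A ∈ H := by
  induction J using Finset.induction_on with
  | empty =>
    intro A hA
    have : A = 1 := by
      ext1
      ext i j
      have := congrFun (hA j (by simp)) i
      rw [ind_singleton, mulVec_single_one] at this
      simpa [Matrix.one_apply, Pi.single_apply] using this
    rw [this]; exact one_mem H
  | insert p J' hp ih =>
    intro A hA
    set J := insert p J' with hJ
    have hpJ : p ∈ J := by simp [hJ]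
    obtain ⟨v, hv⟩ := exists_ind (A.1 *ᵥ ind {p})
    have hvJ : v ⊆ J := by
      intro i hi
      by_contra hiJ
      have := mulVec_dotProduct_mulVec A (ind {p}) (ind {i})
      rw [hv, hA i hiJ, ind_dotProduct, ind_dotProduct, Finset.inter_singleton_of_mem hi,
        Finset.inter_singleton_of_notMem] at this
      · simp at this
      · simp only [Finset.mem_singleton]; rintro rfl; exact hiJ hpJ
    have hodd : v.card % 2 = 1 := by
      have := mulVec_dotProduct_mulVec A (ind {p}) (ind {p})
      rw [hv, ind_dotProduct, ind_dotProduct, Finset.inter_self, Finset.inter_self,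
        Finset.card_singleton] at this
      exact (ZMod.natCast_eq_natCast_iff _ _ 2).1 this
    -- every orthogonal matrix fixes the all-ones vector, because `x · x = 1 · x`
    have hself : ∀ x : α → ZMod 2, x ⬝ᵥ x = x ⬝ᵥ ind Finset.univ := by
      intro x
      simp only [dotProduct]
      refine Finset.sum_congr rfl fun i _ => ?_
      rcases zmod_two_cases (x i) with h | h <;> simp [h, ind]
    have hones : A.1 *ᵥ ind Finset.univ = ind Finset.univ := by
      ext i
      have h1 := hself ((A⁻¹).1 *ᵥ ind {i})
      rw [mulVec_dotProduct_mulVec, ← mulVec_dotProduct_mulVec A ((A⁻¹).1 *ᵥ ind {i}),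
        mulVec_mulVec, ← Submonoid.coe_mul, mul_inv_cancel, Submonoid.coe_one, one_mulVec,
        hself, ind_singleton, single_one_dotProduct, single_one_dotProduct] at h1
      exact h1.symm
    have hJc : ∀ L : Finset α, Disjoint L J → A.1 *ᵥ ind L = ind L := by
      intro L
      induction L using Finset.induction_on with
      | empty => intro _; have : ind (∅ : Finset α) = 0 := by ext; simp [ind]
                 rw [this, mulVec_zero]
      | insert i L hi ihL =>
        intro hd
        rw [Finset.disjoint_insert_left] at hd
        have : ind (insert i L) = ind {i} + ind L := by
          rw [← ind_symmDiff]; congr 1; ext x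
          simp only [Finset.mem_insert, Finset.mem_symmDiff, Finset.mem_singleton]
          by_cases h : x = i
          · subst h; simp [hi]
          · simp [h]
        rw [this, mulVec_add, hA i hd.1, ihL hd.2]
    have hne : v.card = 1 ∨ v ≠ J := by
      by_contra! h
      have e : ind (Finset.univ : Finset α) = ind J + ind Jᶜ := by
        rw [← ind_symmDiff]; congr 1; ext x; simp
      have h1 : A.1 *ᵥ ind J = ind J := by
        have := hones
        rw [e, mulVec_add, hJc _ disjoint_compl_left] at this
        exact add_right_cancel this
      have h2 : A.1 *ᵥ ind J = A.1 *ᵥ ind {p} := by rw [h1, hv, h.2]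
      have h3 : ind J = ind {p} := by
        have := congrArg ((A⁻¹).1 *ᵥ ·) h2
        simpa only [mulVec_mulVec, ← Submonoid.coe_mul, inv_mul_cancel, Submonoid.coe_one,
          one_mulVec] using this
      apply h.1
      rw [h.2, ind_injective h3, Finset.card_singleton]
    obtain ⟨C, hC, hCfix, hCp⟩ := exists_mem_carry H hP hT J p hpJ (v.card / 2) v hvJ
      (by omega) hne
    have hmem : C⁻¹ * A ∈ H := by
      refine ih _ fun i hi => ?_
      have hCA : A.1 *ᵥ ind {i} = C.1 *ᵥ ind {i} := by
        by_cases hip : i = p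
        · rw [hip, hCp, hv]
        · have hiJ : i ∉ J := by simp [hJ, hip, hi]
          rw [hA i hiJ, hCfix i hiJ]
      rw [Submonoid.coe_mul, ← mulVec_mulVec, hCA, mulVec_mulVec, ← Submonoid.coe_mul,
        inv_mul_cancel, Submonoid.coe_one, one_mulVec]
    simpa using mul_mem hC hmem

end Orthogonal

/-! ### The relators in the orthogonal group -/

section Relators

open Matrix

/-- `A` acts on the coordinates in the image of `ι` as `A'`, and trivially on the others. -/
def Extends {α β : Type*} [Fintype α] [Fintype β] (ι : β ↪ α) (A : Matrix α α (ZMod 2))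
    (A' : Matrix β β (ZMod 2)) : Prop :=
  ∀ x, (∀ i, (A *ᵥ x) (ι i) = (A' *ᵥ (x ∘ ι)) i) ∧ ∀ j ∉ Set.range ι, (A *ᵥ x) j = x j

namespace Extends

variable {α β : Type*} [Fintype α] [Fintype β] {ι : β ↪ α}
  {A C : Matrix α α (ZMod 2)} {A' C' : Matrix β β (ZMod 2)}

theorem mul (hA : Extends ι A A') (hC : Extends ι C C') : Extends ι (A * C) (A' * C') := by
  intro x
  have e : (C *ᵥ x) ∘ ι = C' *ᵥ (x ∘ ι) := funext (hC x).1
  refine ⟨fun i => ?_, fun j hj => ?_⟩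
  · rw [← mulVec_mulVec, ← mulVec_mulVec, (hA _).1, e]
  · rw [← mulVec_mulVec, (hA _).2 j hj, (hC _).2 j hj]

variable [DecidableEq α]

theorem eq (hA : Extends ι A A') (hC : Extends ι C A') : A = C := by
  refine ext_mulVec fun x => funext fun j => ?_
  by_cases hj : j ∈ Set.range ι
  · obtain ⟨i, rfl⟩ := hj
    rw [(hA x).1, (hC x).1]
  · rw [(hA x).2 j hj, (hC x).2 j hj]

variable [DecidableEq β]

theorem one : Extends ι (1 : Matrix α α (ZMod 2)) 1 := fun x =>
  ⟨fun i => by rw [one_mulVec, one_mulVec]; rfl, fun j _ => by rw [one_mulVec]⟩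

theorem pow (hA : Extends ι A A') (n : ℕ) : Extends ι (A ^ n) (A' ^ n) := by
  induction n with
  | zero => simpa using one
  | succ n ih => rw [pow_succ, pow_succ]; exact ih.mul hA

theorem perm (σ : Perm β) : Extends ι (permO (Perm.viaEmbeddingHom ι σ)).1 (permO σ).1 := by
  intro x
  rw [permO_mulVec]
  have e : (Perm.viaEmbeddingHom ι σ).symm = Perm.viaEmbedding σ⁻¹ ι := by
    rw [← Perm.viaEmbeddingHom_apply, map_inv]; rfl
  refine ⟨fun i => ?_, fun j hj => ?_⟩
  · rw [permO_mulVec, e]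
    change x (Perm.viaEmbedding σ⁻¹ ι (ι i)) = _
    rw [Perm.viaEmbedding_apply]; rfl
  · rw [e]
    change x (Perm.viaEmbedding σ⁻¹ ι j) = _
    rw [Perm.viaEmbedding_apply_of_notMem _ _ _ hj]

theorem trans (I : Finset β) : Extends ι (transM (I.map ι)) (transM I) := by
  intro x
  have e : ind (I.map ι) ⬝ᵥ x = ind I ⬝ᵥ (x ∘ ι) := by
    simp only [dotProduct, ind, ite_mul, one_mul, zero_mul, Finset.sum_ite_mem,
      Finset.univ_inter, Finset.sum_map, Function.comp_apply]
  rw [transM_mulVec, transM_mulVec, e]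
  refine ⟨fun i => by simp [ind], fun j hj => ?_⟩
  have : j ∉ I.map ι := fun h => by
    obtain ⟨i, -, rfl⟩ := Finset.mem_map.1 h
    exact hj ⟨i, rfl⟩
  simp [ind, this]

end Extends

/-- Relator (5) for `g = 5`. -/
theorem relator_five : ((permO (swap (3 : Fin 5) 4)).1 * transM (base 5)) ^ 3 = 1 := by
  have e : (permO (swap (3 : Fin 5) 4)).1 * transM (base 5) =
    !![0, 1, 1, 1, 0; 1, 0, 1, 1, 0; 1, 1, 0, 1, 0; 0, 0, 0, 0, 1; 1, 1, 1, 0, 0] := by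
    decide +kernel
  rw [e, pow_succ, pow_two]
  decide +kernel

/-- The `9`th power in relator (6) is trivial for `g = 7`. -/
theorem relator_seven : ((permO TSys.cyc7).1 * transM (base 7)) ^ 9 = 1 := by
  have e : (permO TSys.cyc7).1 * transM (base 7) =
    !![0, 0, 0, 0, 0, 0, 1; 0, 1, 1, 1, 0, 0, 0; 1, 0, 1, 1, 0, 0, 0; 1, 1, 0, 1, 0, 0, 0;
      1, 1, 1, 0, 0, 0, 0; 0, 0, 0, 0, 1, 0, 0; 0, 0, 0, 0, 0, 1, 0] := by
    decide +kernel
  have e3 : ((permO TSys.cyc7).1 * transM (base 7)) ^ 3 =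
    !![0, 0, 0, 0, 1, 0, 0; 1, 1, 0, 1, 0, 0, 0; 1, 1, 0, 0, 0, 1, 0; 1, 0, 1, 1, 0, 1, 1;
      0, 1, 1, 1, 0, 1, 1; 1, 1, 0, 0, 0, 0, 1; 1, 1, 1, 0, 0, 0, 0] := by
    rw [e, pow_succ, pow_two]
    decide +kernel
  rw [show 9 = 3 * 3 from rfl, pow_mul, e3, pow_succ, pow_two]
  decide +kernel

/-- The `12`th power in relator (6) is trivial for `g = 7`. -/
theorem relator_six : ((permO TSys.cyc6).1 * transM (base 7)) ^ 12 = 1 := by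
  have e : (permO TSys.cyc6).1 * transM (base 7) =
    !![0, 1, 1, 1, 0, 0, 0; 0, 0, 0, 0, 0, 0, 1; 1, 0, 1, 1, 0, 0, 0; 1, 1, 0, 1, 0, 0, 0;
      1, 1, 1, 0, 0, 0, 0; 0, 0, 0, 0, 1, 0, 0; 0, 0, 0, 0, 0, 1, 0] := by
    decide +kernel
  have e3 : ((permO TSys.cyc6).1 * transM (base 7)) ^ 3 =
    !![1, 0, 1, 1, 0, 1, 1; 0, 0, 0, 0, 1, 0, 0; 1, 1, 0, 1, 0, 0, 0; 1, 1, 0, 0, 0, 1, 0;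
      0, 1, 1, 1, 0, 1, 1; 1, 1, 0, 0, 0, 0, 1; 1, 1, 1, 0, 0, 0, 0] := by
    rw [e, pow_succ, pow_two]
    decide +kernel
  have e6 : ((permO TSys.cyc6).1 * transM (base 7)) ^ 6 =
    !![1, 0, 0, 0, 0, 0, 0; 0, 1, 1, 1, 0, 1, 1; 0, 1, 1, 1, 1, 0, 1; 0, 1, 1, 1, 1, 1, 0;
      0, 0, 1, 1, 1, 1, 1; 0, 1, 0, 1, 1, 1, 1; 0, 1, 1, 0, 1, 1, 1] := by
    rw [pow_mul (_ * _) 3 2, e3, pow_two]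
    decide +kernel
  rw [show 12 = 6 * 2 from rfl, pow_mul, e6, pow_two]
  decide +kernel

theorem extend_relator {n g k : ℕ} (hn : 4 ≤ n) (h : n ≤ g) (σ : Perm (Fin n))
    (hrel : ((permO σ).1 * transM (base n)) ^ k = 1) :
    (permO (Perm.viaEmbeddingHom (Fin.castLEEmb h) σ) *
      transO (base g) (card_base (hn.trans h))) ^ k = 1 := by
  have h1 := ((Extends.perm (ι := Fin.castLEEmb h) σ).mul (Extends.trans (base n))).pow k
  rw [hrel, map_base hn h] at h1
  ext1
  exact h1.eq Extends.one

end Relators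

/-! ### The isomorphism -/

section Presentation

theorem perm_hom_ext {G : Type*} [Group G] {g : ℕ} (f f' : Perm (Fin g) →* G)
    (h : ∀ i (hi : i + 1 < g), f (swap ⟨i, by omega⟩ ⟨i + 1, hi⟩) =
      f' (swap ⟨i, by omega⟩ ⟨i + 1, hi⟩)) : f = f' := by
  cases g with
  | zero => ext σ; rw [Subsingleton.elim σ 1, map_one, map_one]
  | succ n =>
    refine MonoidHom.eq_of_eqOn_denseM (Perm.mclosure_swap_castSucc_succ n) ?_
    rintro _ ⟨i, rfl⟩
    exact h i (by omega)

/-- The images of the generators: `b` goes to the transvection along the first four letters and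
`aᵢ` to the transposition of the letters `i - 1` and `i` (counted from `0`). -/
def genO {g : ℕ} (hg : 4 ≤ g) (i : Fin g) : Matrix.orthogonalGroup (Fin g) (ZMod 2) :=
  if (i : ℕ) = 0 then transO (base g) (card_base hg)
  else permO (swap ⟨i - 1, by omega⟩ i)

theorem lift_gen_zero {g : ℕ} (hg : 4 ≤ g) :
    FreeGroup.lift (genO hg) (gen g 0) = transO (base g) (card_base hg) := by
  rw [gen, dif_pos (by omega), FreeGroup.lift_apply_of]; rfl

theorem lift_gen_succ {g : ℕ} (hg : 4 ≤ g) (i : ℕ) (hi : i + 1 < g) :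
    FreeGroup.lift (genO hg) (gen g (i + 1)) = permO (swap ⟨i, by omega⟩ ⟨i + 1, hi⟩) := by
  rw [gen, dif_pos hi, FreeGroup.lift_apply_of]; rfl

theorem transO_mul_self {g : ℕ} (hg : 4 ≤ g) :
    transO (base g) (card_base hg) * transO (base g) (card_base hg) = 1 := by
  ext1; exact transM_mul_self (card_base hg)

/-- The relators hold for the images of the generators in the orthogonal group. -/
theorem lift_rels {g : ℕ} (hg : 4 ≤ g) : ∀ r ∈ rels g, FreeGroup.lift (genO hg) r = 1 := by
  rintro r (((((⟨i, hi, rfl⟩ | ⟨i, j, h1, h2, hi, hj, hij, rfl⟩) | ⟨i, h1, hi, rfl⟩) |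
    ⟨i, h1, hi, h4, rfl⟩) | ⟨h5, rfl⟩) | ⟨h7, rfl⟩)
  · rw [map_pow, pow_two]
    rcases i with _ | i
    · rw [lift_gen_zero hg, transO_mul_self hg]
    · rw [lift_gen_succ hg i hi, ← map_mul, swap_mul_self, map_one]
  · obtain ⟨i, rfl⟩ := Nat.exists_eq_add_of_le' h1
    obtain ⟨j, rfl⟩ := Nat.exists_eq_add_of_le' h2
    have hd : Commute (swap (⟨i, by omega⟩ : Fin g) ⟨i + 1, hi⟩) (swap ⟨j, by omega⟩ ⟨j + 1, hj⟩) :=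
      (Perm.disjoint_swap_swap (by simp [Fin.ext_iff]; omega)).commute
    rw [map_pow, map_mul, lift_gen_succ hg i hi, lift_gen_succ hg j hj, ← map_mul, ← map_pow,
      hd.mul_pow, pow_two, pow_two, swap_mul_self, swap_mul_self, one_mul, map_one]
  · obtain ⟨i, rfl⟩ := Nat.exists_eq_add_of_le' h1
    have h3 : (swap (⟨i, by omega⟩ : Fin g) ⟨i + 1, by omega⟩ *
        swap ⟨i + 1, by omega⟩ ⟨i + 1 + 1, hi⟩) ^ 3 = 1 := by
      rw [swap_comm]
      have := Perm.isThreeCycle_swap_mul_swap_same (a := (⟨i + 1, by omega⟩ : Fin g))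
        (b := ⟨i, by omega⟩) (c := ⟨i + 1 + 1, hi⟩) (by simp) (by simp) (by simp; omega)
      rw [← this.orderOf, pow_orderOf_eq_one]
    rw [map_pow, map_mul, lift_gen_succ hg i (by omega), lift_gen_succ hg (i + 1) hi, ← map_mul,
      ← map_pow, h3, map_one]
  · obtain ⟨i, rfl⟩ := Nat.exists_eq_add_of_le' h1
    rw [map_pow, map_mul, lift_gen_succ hg i hi, lift_gen_zero]
    have e : (base g).map (swap (⟨i, by omega⟩ : Fin g) ⟨i + 1, hi⟩).toEmbedding = base g :=
      map_swap_of_iff (by simp only [mem_base]; omega)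
    have hc := permO_mul_transO (swap (⟨i, by omega⟩ : Fin g) ⟨i + 1, hi⟩) _ (card_base hg)
    simp only [e] at hc
    rw [Commute.mul_pow hc, pow_two, pow_two, transO_mul_self hg, ← map_mul, swap_mul_self, map_one,
      one_mul]
  · have := extend_relator (by omega) h5 _ relator_five
    rw [TSys.viaEmbedding_swap] at this
    rw [map_pow, map_mul, lift_gen_succ hg 3 (by omega), lift_gen_zero]
    exact this
  · have e6 := extend_relator (by omega) h7 _ relator_six
    have e7 := extend_relator (by omega) h7 _ relator_seven
    simp only [TSys.cyc6, TSys.cyc7, map_mul, TSys.viaEmbedding_swap] at e6 e7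
    simp only [map_mul, map_inv, map_pow, lift_gen_zero, lift_gen_succ hg 0 (by omega),
      lift_gen_succ hg 1 (by omega), lift_gen_succ hg 2 (by omega), lift_gen_succ hg 3 (by omega),
      lift_gen_succ hg 4 (by omega), lift_gen_succ hg 5 (by omega)]
    rw [mul_inv_eq_one]
    exact e6.trans e7.symm

/-- Relators (1)–(5) make the presented group carry a system of transvections, and (6) gives
`Seven`, which is vacuous if there are fewer than seven letters. -/
theorem exists_tsys_presented {g : ℕ} (hg : 4 ≤ g) :
    ∃ S : TSys (Fin g) (PresentedGroup (rels g)),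
      (∀ i (h : i + 1 < g), S.s (swap ⟨i, by omega⟩ ⟨i + 1, h⟩) =
        PresentedGroup.mk (rels g) (gen g (i + 1))) ∧
      S.B (base g) = PresentedGroup.mk (rels g) (gen g 0) ∧ S.Seven := by
  have hone : ∀ {r}, r ∈ rels g → PresentedGroup.mk (rels g) r = 1 :=
    fun hr => PresentedGroup.one_of_mem hr
  have sq : ∀ i, i < g → PresentedGroup.mk (rels g) (gen g i) *
      PresentedGroup.mk (rels g) (gen g i) = 1 := by
    intro i hi
    rw [← map_mul, ← pow_two]
    exact hone (Or.inl (Or.inl (Or.inl (Or.inl (Or.inl ⟨i, hi, rfl⟩)))))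
  have inv : ∀ i, i < g → (PresentedGroup.mk (rels g) (gen g i))⁻¹ =
      PresentedGroup.mk (rels g) (gen g i) := fun i hi => inv_eq_of_mul_eq_one_left (sq i hi)
  have comm : ∀ i j, i < g → j < g → (gen g i * gen g j) ^ 2 ∈ rels g →
      Commute (PresentedGroup.mk (rels g) (gen g i)) (PresentedGroup.mk (rels g) (gen g j)) := by
    intro i j hi hj h
    have := hone h
    rw [map_pow, map_mul, pow_two] at this
    have := eq_inv_of_mul_eq_one_left this
    rwa [mul_inv_rev, inv i hi, inv j hj] at this
  obtain ⟨s, hs⟩ := exists_perm_hom g (fun i => PresentedGroup.mk (rels g) (gen g (i + 1)))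
    (fun i hi => sq _ hi) (fun i hi => by
      have := hone (Or.inl (Or.inl (Or.inl (Or.inr ⟨i + 1, by omega, by omega, rfl⟩))))
      rw [map_pow, map_mul, pow_succ, pow_two] at this
      have h1 := inv (i + 1) (by omega)
      have h2 := inv (i + 1 + 1) (by omega)
      generalize PresentedGroup.mk (rels g) (gen g (i + 1)) = x at *
      generalize PresentedGroup.mk (rels g) (gen g (i + 1 + 1)) = y at *
      have h3 : x * y * x * (y * x * y) = 1 := by rw [← this]; group
      have h4 := eq_inv_of_mul_eq_one_left h3
      rw [h4, mul_inv_rev, mul_inv_rev, h1, h2, mul_assoc])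
    (fun i j hij hj => comm _ _ (by omega) (by omega)
      (Or.inl (Or.inl (Or.inl (Or.inl (Or.inr
        ⟨i + 1, j + 1, by omega, by omega, by omega, by omega, by omega, rfl⟩))))))
  obtain ⟨S, hSs, hSB⟩ := exists_tsys hg s (PresentedGroup.mk (rels g) (gen g 0))
    (sq 0 (by omega))
    (fun i hi h3 => by
      rw [hs i hi]
      exact comm _ _ hi (by omega) (Or.inl (Or.inl (Or.inr
        ⟨i + 1, by omega, by omega, by omega, rfl⟩))))
    (fun h4 => by
      rw [hs 3 h4, ← map_mul, ← map_pow]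
      exact hone (Or.inl (Or.inr ⟨h4, rfl⟩)))
  refine ⟨S, by rw [hSs]; exact hs, hSB, ?_⟩
  rcases lt_or_ge g 7 with h7 | h7
  · exact S.seven_of_card_lt (by rwa [Fintype.card_fin])
  · refine S.seven_of_embedding (Fin.castLEEmb h7) ?_
    have hb7 : ({0, 1, 2, 3} : Finset (Fin 7)) = base 7 := by decide
    have hB : (S.comap (Fin.castLEEmb h7)).B {0, 1, 2, 3} =
        PresentedGroup.mk (rels g) (gen g 0) := by
      rw [hb7, ← hSB, ← map_base (by omega) h7]; rfl
    have hsw : ∀ i (h : i + 1 < 7), (S.comap (Fin.castLEEmb h7)).s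
        (swap ⟨i, by omega⟩ ⟨i + 1, h⟩) = PresentedGroup.mk (rels g) (gen g (i + 1)) := by
      intro i h
      change S.s (Perm.viaEmbeddingHom _ _) = _
      rw [TSys.viaEmbedding_swap, hSs]
      exact hs i (by omega)
    have h6 := hone (Or.inr ⟨h7, rfl⟩)
    rw [map_mul, map_inv, mul_inv_eq_one] at h6
    simp only [map_mul, map_pow] at h6
    simp only [TSys.cyc6, TSys.cyc7, map_mul]
    rw [hB]
    exact (by
      rw [← hsw 0 (by omega), ← hsw 1 (by omega), ← hsw 2 (by omega), ← hsw 3 (by omega),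
        ← hsw 4 (by omega), ← hsw 5 (by omega)] at h6
      exact h6)

end Presentation

/-- for `g ≥ 4` odd, `g = 4` or `g = 6`, the group `O(g, ℤ/2)` is isomorphic to the
group presented by the generators `a₁, …, a_{g-1}, b` and the relators (1)–(6). -/
theorem stmt_3 (g : ℕ) (hg : (4 ≤ g ∧ Odd g) ∨ g = 4 ∨ g = 6) :
    Nonempty (PresentedGroup (rels g) ≃* Matrix.orthogonalGroup (Fin g) (ZMod 2)) := by
  have h4 : 4 ≤ g := by omega
  obtain ⟨S, hs, hB, h7⟩ := exists_tsys_presented h4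
  let Φ : PresentedGroup (rels g) →* Matrix.orthogonalGroup (Fin g) (ZMod 2) :=
    PresentedGroup.toGroup (lift_rels h4)
  have hΦ : ∀ r, Φ (PresentedGroup.mk (rels g) r) = FreeGroup.lift (genO h4) r := fun r => rfl
  have hΦs : ∀ σ, Φ (S.s σ) = permO σ := by
    have : Φ.comp S.s = permO := perm_hom_ext _ _ fun i hi => by
      rw [MonoidHom.comp_apply, hs i hi, hΦ, lift_gen_succ h4 i hi]
    exact fun σ => DFunLike.congr_fun this σ
  have hΦB : ∀ I (hI : I.card = 4), Φ (S.B I) = transO I hI := by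
    intro I hI
    obtain ⟨σ, rfl, -⟩ := TSys.exists_perm_map_pair (I := base g) (I' := I) (w := ∅) (w' := ∅)
      (by rw [hI, card_base h4]) rfl (by simp) (by simp)
    have h1 := congrArg Φ (S.conj σ (base g) (card_base h4))
    rw [map_mul, map_mul, hΦs, hB, hΦ, lift_gen_zero, permO_mul_transO] at h1
    exact (mul_right_cancel h1).symm
  have htop : S.N Finset.univ = ⊤ := by
    rw [eq_top_iff, ← PresentedGroup.closure_range_of, Subgroup.closure_le]
    rintro _ ⟨⟨i, hi⟩, rfl⟩
    have e : PresentedGroup.of ⟨i, hi⟩ = PresentedGroup.mk (rels g) (gen g i) := by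
      rw [gen, dif_pos hi]; rfl
    rw [e]
    rcases i with _ | i
    · rw [← hB]; exact S.B_mem_N (card_base h4) (Finset.subset_univ _)
    · rw [← hs i hi]; exact S.s_mem_N fun x hx => absurd (Finset.mem_univ x) hx
  refine ⟨MulEquiv.ofBijective Φ ⟨?_, ?_⟩⟩
  · rw [injective_iff_map_eq_one]
    intro m hm
    refine TSys.eq_one_of_act h7 (actO.comp Φ) (fun σ v => ?_) (fun I v hI => ?_) Finset.univ m
      (htop ▸ Subgroup.mem_top m) (by rw [MonoidHom.comp_apply, hm, map_one])
    · rw [MonoidHom.comp_apply, hΦs]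
      exact actO_eq (permO_ind σ v)
    · rw [MonoidHom.comp_apply, hΦB I hI]
      exact actO_eq (transM_ind I v)
  · intro A
    exact mem_of_generators Φ.range (fun σ => ⟨_, hΦs σ⟩) (fun I hI => ⟨_, hΦB I hI⟩) Finset.univ A
      fun i hi => absurd (Finset.mem_univ i) hi
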